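/- arXiv:1812.00808 — 11 statements merged into one kernel-verified Lean document; each statement's English description precedes it below -/
import Mathlib

section
/- Let s ≥ 1 and K ≥ 0 be integers and let γ^0, …, γ^K ∈ ℝ^s. Then the following are equivalent: (i) for every integer m ≥ 1, every matrix A ∈ ℝ^{m×m} and every vector c ∈ ℝ^m satisfying A𝟙 = c, one has c = Σ_{k=0}^{K} ((γ^k)ᵀ𝟙) · A c^{×k}; (ii) (γ^0)ᵀ𝟙 = 1 and (γ^k)ᵀ𝟙 = 0 for all 1 ≤ k ≤ K. (These are the internal consistency conditions for step predictor-corrector MRI-GARK methods: the coupling abscissa condition c^{F} = Σ_{k≥0} A^{FF} c^{F×k} (γ^k)ᵀ𝟙 holds for every consistent fast Runge–Kutta method if and only if the stated conditions on the γ^k hold.) -/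
/-!
Only the sums `w k = (γ^k)ᵀ𝟙` enter, and the conditions on them say `w = Pi.single 0 1`. For such
`w` the coupling sum collapses to `A𝟙 = c`. Conversely, the one-stage methods `A = (x)`, `c = (x)`
already give `x * ∑ k, w k * x ^ k = x` for every scalar `x`. Over an infinite domain this is the
polynomial identity `X * ∑ k, w k X ^ k = X`, and cancelling `X` identifies the coefficients.
-/

open Polynomial Matrix

theorem eval_ofFn_eq_sum {R : Type*} [Semiring R] [DecidableEq R] {n : ℕ} (w : Fin n → R) (x : R) :
    (ofFn n w).eval x = ∑ k, w k * x ^ (k : ℕ) := by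
  simp [ofFn_eq_sum_monomial, eval_finsetSum]

theorem ofFn_single_zero_one {R : Type*} [Semiring R] [DecidableEq R] (K : ℕ) :
    ofFn (K + 1) (Pi.single 0 1 : Fin (K + 1) → R) = 1 := by
  simp [ofFn_eq_sum_monomial, Pi.single_apply, apply_ite]

theorem eq_single_zero_one_iff {R : Type*} [Zero R] [One R] {K : ℕ} (w : Fin (K + 1) → R) :
    w = Pi.single 0 1 ↔ w 0 = 1 ∧ ∀ k : Fin (K + 1), 1 ≤ (k : ℕ) → w k = 0 := by
  simp only [funext_iff, Fin.forall_fin_succ]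
  simp

theorem eq_single_zero_one_of_forall_mul_sum_pow_eq {R : Type*} [CommRing R] [IsDomain R]
    [Infinite R] {K : ℕ} {w : Fin (K + 1) → R} (h : ∀ x : R, x * ∑ k, w k * x ^ (k : ℕ) = x) :
    w = Pi.single 0 1 := by
  classical
  have X_mul_ofFn : X * ofFn (K + 1) w = X * 1 :=
    Polynomial.funext fun x => by simpa [eval_ofFn_eq_sum] using h x
  have ofFn_eq_one : ofFn (K + 1) w = 1 := mul_left_cancel₀ X_ne_zero X_mul_ofFn
  exact injective_ofFn (K + 1) (ofFn_eq_one.trans (ofFn_single_zero_one K).symm)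

theorem sum_single_zero_one_smul_mulVec_pow {R m n : Type*} [Semiring R] [Fintype n] (K : ℕ)
    (A : Matrix m n R) (c : n → R) :
    ∑ k : Fin (K + 1), (Pi.single 0 1 : Fin (K + 1) → R) k • A *ᵥ (fun i => c i ^ (k : ℕ)) =
      A *ᵥ fun _ => 1 := by
  simp [Pi.single_apply, ite_smul]

theorem stmt_0_general {R ι : Type*} [CommRing R] [IsDomain R] [Infinite R] [Fintype ι] {K : ℕ}
    (γ : Fin (K + 1) → ι → R) :
    (∀ m : ℕ, 1 ≤ m → ∀ (A : Matrix (Fin m) (Fin m) R) (c : Fin m → R),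
        A *ᵥ (fun _ => 1) = c →
        c = ∑ k : Fin (K + 1), (∑ i, γ k i) • A *ᵥ (fun i => c i ^ (k : ℕ)))
    ↔ (∑ i, γ 0 i = 1 ∧ ∀ k : Fin (K + 1), 1 ≤ (k : ℕ) → ∑ i, γ k i = 0) := by
  rw [← eq_single_zero_one_iff fun k => ∑ i, γ k i]
  constructor
  · intro coupling
    refine eq_single_zero_one_of_forall_mul_sum_pow_eq fun x => ?_
    have one_stage := congrFun (coupling 1 le_rfl !![x] ![x] (by ext; simp [mulVec, dotProduct])) 0
    simpa [mulVec, dotProduct, Finset.mul_sum, mul_left_comm] using one_stage.symm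
  · intro weights_eq m _ A c row_sums
    simp only [congrFun weights_eq]
    rw [sum_single_zero_one_smul_mulVec_pow, row_sums]

/-- Internal consistency conditions for step predictor-corrector MRI-GARK methods. -/
theorem stmt_0 (s K : ℕ) (hs : 1 ≤ s) (γ : Fin (K + 1) → Fin s → ℝ) :
    (∀ (m : ℕ), 1 ≤ m → ∀ (A : Matrix (Fin m) (Fin m) ℝ) (c : Fin m → ℝ),
        A.mulVec (fun _ => (1 : ℝ)) = c →
        c = ∑ k : Fin (K + 1), (∑ i, γ k i) • A.mulVec (fun i => c i ^ (k : ℕ)))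
    ↔ ((∑ i, γ 0 i) = 1 ∧ ∀ k : Fin (K + 1), 1 ≤ (k : ℕ) → (∑ i, γ k i) = 0) :=
  stmt_0_general γ
end

section
/- Let s ≥ 1 and K ≥ 0 be integers, let δc, c̄ ∈ ℝ^s, and let Γ^0, …, Γ^K, Ψ^0, …, Ψ^K ∈ ℝ^{s×s}. Let L ∈ ℝ^{s×s} be the lower shift matrix (L_{i,j} = 1 if i = j+1 and 0 otherwise). Then the following are equivalent: (i) for every integer m ≥ 1, every matrix A ∈ ℝ^{m×m} and vector c ∈ ℝ^m with A𝟙 = c, one has L c̄ ⊗ 𝟙_m + δc ⊗ c = L c̄ ⊗ 𝟙_m + Σ_{k=0}^{K} ((Ψ^k + Γ^k)𝟙) ⊗ (A c^{×k}); (ii) (Ψ^0 + Γ^0)𝟙 = δc and (Ψ^k + Γ^k)𝟙 = 0 for all 1 ≤ k ≤ K. (These are the internal consistency conditions for internal stage predictor-corrector MRI-GARK methods.) -/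
/-!
Write `δ = δc` and `w k = (Ψ k + Γ k) 𝟙`. For a scalar method `A = (a)`, `c = a`, the condition at
slow stage `i` reads `δ i * a = ∑ k, w k i * a ^ (k + 1)`. Cancelling `a ≠ 0` and letting `a` vary,
the polynomial `∑ k, w k i * X ^ k - δ i` has infinitely many roots, so its coefficients vanish.
Conversely, when only the weight `w 0 = δ` survives, the condition is `A 𝟙 = c`.
-/

open Matrix

section PowerSums

variable {R : Type*} [CommRing R] [IsDomain R] {n : ℕ}

theorem eq_zero_of_forall_mem_sum_pow_mul_eq_zero {S : Set R} (hS : S.Infinite) {v : Fin n → R}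
    (h : ∀ a ∈ S, ∑ k : Fin n, a ^ (k : ℕ) * v k = 0) : v = 0 := by
  let node : Fin n → R := fun j ↦ hS.natEmbedding S j
  have node_injective : Function.Injective node :=
    Subtype.val_injective.comp ((hS.natEmbedding S).injective.comp Fin.val_injective)
  exact eq_zero_of_forall_index_sum_pow_mul_eq_zero node_injective
    fun j ↦ h (node j) (hS.natEmbedding S j).2

theorem eq_single_zero_of_forall_mul_eq_sum_mul_pow [Infinite R] [NeZero n] {d : R} {v : Fin n → R}
    (h : ∀ a, d * a = ∑ k, v k * (a * a ^ (k : ℕ))) : v = Pi.single 0 d := by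
  have nonzero_infinite : ({0}ᶜ : Set R).Infinite := (Set.finite_singleton 0).infinite_compl
  refine sub_eq_zero.mp
    (eq_zero_of_forall_mem_sum_pow_mul_eq_zero nonzero_infinite fun a ha ↦ ?_)
  have sum_single : ∑ k : Fin n, a ^ (k : ℕ) * (Pi.single 0 d : Fin n → R) k = d := by
    simp [Pi.single_apply]
  have sum_eq : ∑ k : Fin n, a ^ (k : ℕ) * v k = d := by
    refine mul_left_cancel₀ ha ?_
    rw [mul_comm a d, h a, Finset.mul_sum]
    exact Finset.sum_congr rfl fun k _ ↦ by ring
  simp only [Pi.sub_apply, mul_sub, Finset.sum_sub_distrib, sum_eq, sum_single, sub_self]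

end PowerSums

theorem sum_mul_mulVec_pow_of_forall_ne_zero {R l m : Type*} [Semiring R] [Fintype m] {n : ℕ}
    [NeZero n] {v : Fin n → R} (hv : ∀ k ≠ 0, v k = 0) (A : Matrix l m R) (c : m → R) (j : l) :
    ∑ k, v k * (A *ᵥ fun i ↦ c i ^ (k : ℕ)) j = v 0 * (A *ᵥ fun _ ↦ 1) j := by
  rw [Fintype.sum_eq_single 0 fun k hk ↦ by rw [hv k hk, zero_mul]]
  simp only [Fin.val_zero, pow_zero]

theorem stmt_1_general {R ι : Type*} [CommRing R] [IsDomain R] [Infinite R] {K : ℕ}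
    (base δ : ι → R) (w : Fin (K + 1) → ι → R) :
    (∀ m : ℕ, 1 ≤ m → ∀ (A : Matrix (Fin m) (Fin m) R) (c : Fin m → R), (A *ᵥ fun _ ↦ 1) = c →
        (fun p : ι × Fin m ↦ base p.1 + δ p.1 * c p.2)
          = fun p ↦ base p.1 + ∑ k, w k p.1 * (A *ᵥ fun i ↦ c i ^ (k : ℕ)) p.2)
    ↔ (w 0 = δ ∧ ∀ k : Fin (K + 1), 1 ≤ (k : ℕ) → w k = 0) := by
  simp only [Nat.one_le_iff_ne_zero, Fin.val_ne_zero_iff]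
  constructor
  · intro h
    have w_eq_single (i : ι) : (fun k ↦ w k i) = Pi.single 0 (δ i) := by
      refine eq_single_zero_of_forall_mul_eq_sum_mul_pow fun a ↦ ?_
      have scalar_method := h 1 one_ne_zero (of fun _ _ ↦ a) (fun _ ↦ a)
        (by ext; simp [mulVec, dotProduct])
      simpa [mulVec, dotProduct] using congrFun scalar_method (i, 0)
    refine ⟨funext fun i ↦ ?_, fun k hk ↦ funext fun i ↦ ?_⟩
    · simpa using congrFun (w_eq_single i) 0
    · simpa [hk] using congrFun (w_eq_single i) k
  · rintro ⟨rfl, hw⟩ m - A c rfl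
    funext ⟨i, j⟩
    rw [sum_mul_mulVec_pow_of_forall_ne_zero fun k hk ↦ congrFun (hw k hk) i]

/-- Internal consistency conditions for internal stage predictor-corrector MRI-GARK methods. -/
theorem stmt_1 (s K : ℕ) (hs : 1 ≤ s) (δc cbar : Fin s → ℝ)
    (Γ Ψ : Fin (K + 1) → Matrix (Fin s) (Fin s) ℝ)
    (L : Matrix (Fin s) (Fin s) ℝ)
    (hL : ∀ i j : Fin s, L i j = if (i : ℕ) = (j : ℕ) + 1 then 1 else 0) :
    (∀ (m : ℕ), 1 ≤ m → ∀ (A : Matrix (Fin m) (Fin m) ℝ) (c : Fin m → ℝ),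
        A.mulVec (fun _ => (1 : ℝ)) = c →
        (fun p : Fin s × Fin m => L.mulVec cbar p.1 * 1 + δc p.1 * c p.2)
          = (fun p : Fin s × Fin m => L.mulVec cbar p.1 * 1 +
              ∑ k : Fin (K + 1), ((Ψ k + Γ k).mulVec (fun _ => (1 : ℝ))) p.1 *
                (A.mulVec (fun i => c i ^ (k : ℕ))) p.2))
    ↔ ((Ψ 0 + Γ 0).mulVec (fun _ => (1 : ℝ)) = δc ∧
        ∀ k : Fin (K + 1), 1 ≤ (k : ℕ) → (Ψ k + Γ k).mulVec (fun _ => (1 : ℝ)) = 0) := by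
  simpa only [mul_one] using
    stmt_1_general (L *ᵥ cbar) δc fun k ↦ (Ψ k + Γ k) *ᵥ fun _ ↦ 1
end

section
/- Let H > 0, λ ∈ ℂ, K ∈ ℕ, let g₀, …, g_K ∈ ℂ^d, and let v : ℝ → ℂ^d be differentiable on [0, H] with v′(θ) = λ v(θ) + Σ_{k=0}^K (θ/H)^k g_k for all θ ∈ [0, H]. Then v(H) = e^{λH} v(0) + H Σ_{k=0}^K φ_{k+1}(λH) g_k. (This is the exact-solution formula for the modified fast ODEs with polynomial slow forcing that underlies the stability functions of multirate infinitesimal GARK methods.) -/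
/-- The φ-functions: φ₀(z) = e^z and φ_{k+1}(z) = ∫₀¹ e^{z(1−t)} t^k dt. -/
noncomputable def phi (k : ℕ) (z : ℂ) : ℂ :=
  match k with
  | 0 => Complex.exp z
  | k + 1 => ∫ t in (0:ℝ)..1, Complex.exp (z * (1 - (t : ℂ))) * (t : ℂ) ^ k

/-!
The integrating factor turns `v' = lam • v + f` into `w' = exp (lam * (b - θ)) • f` for
`w θ = exp (lam * (b - θ)) • v θ`, and integrating over `[a, b]` gives the variation-of-constants
formula. For the forcing `f θ = ∑ k, (θ / H) ^ k • g k` only the scalar coefficients have to be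
integrated, and the substitution `θ = H * t` turns their integrals into
`H * phi (k + 1) (lam * H)`.
-/

open Set MeasureTheory
open scoped Interval

theorem sub_eq_sum_integral_smul_of_hasDeriv_right {𝕜 E ι : Type*} [RCLike 𝕜]
    [NormedAddCommGroup E] [NormedSpace ℝ E] [NormedSpace 𝕜 E] [IsScalarTower ℝ 𝕜 E]
    {s : Finset ι} {a b : ℝ} {w : ℝ → E} {f : ι → ℝ → 𝕜} {g : ι → E}
    (hw : ContinuousOn w [[a, b]])
    (hw' : ∀ θ ∈ Ioo (min a b) (max a b),
      HasDerivWithinAt w (∑ k ∈ s, f k θ • g k) (Ioi θ) θ)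
    (hf : ∀ k ∈ s, IntervalIntegrable (f k) volume a b) :
    w b - w a = ∑ k ∈ s, (∫ θ in a..b, f k θ) • g k := by
  -- `E` may be incomplete, so the vector-valued Bochner integral is unavailable: test against
  -- functionals and apply the fundamental theorem of calculus to scalar functions.
  refine (SeparatingDual.eq_iff_forall_dual_eq (R := 𝕜)).2 fun ℓ ↦ ?_
  have hℓw' : ∀ θ ∈ Ioo (min a b) (max a b),
      HasDerivWithinAt (ℓ ∘ w) (∑ k ∈ s, f k θ * ℓ (g k)) (Ioi θ) θ := fun θ hθ ↦ by
    simpa using (ℓ.restrictScalars ℝ).hasFDerivAt.comp_hasDerivWithinAt θ (hw' θ hθ)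
  have hfℓ : ∀ k ∈ s, IntervalIntegrable (fun θ ↦ f k θ * ℓ (g k)) volume a b :=
    fun k hk ↦ (hf k hk).mul_const _
  have hsum : IntervalIntegrable (fun θ ↦ ∑ k ∈ s, f k θ * ℓ (g k)) volume a b := by
    simpa only [Finset.sum_fn] using IntervalIntegrable.sum s hfℓ
  calc ℓ (w b - w a)
      = ∫ θ in a..b, ∑ k ∈ s, f k θ * ℓ (g k) := by
        rw [intervalIntegral.integral_eq_sub_of_hasDeriv_right
          (ℓ.continuous.comp_continuousOn hw) hℓw' hsum, map_sub, Function.comp_apply,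
          Function.comp_apply]
    _ = ∑ k ∈ s, (∫ θ in a..b, f k θ) * ℓ (g k) := by
        simp only [intervalIntegral.integral_finsetSum hfℓ, intervalIntegral.integral_mul_const]
    _ = ℓ (∑ k ∈ s, (∫ θ in a..b, f k θ) • g k) := by
        simp only [map_sum, map_smul, smul_eq_mul]

theorem integral_cexp_mul_div_pow {H : ℝ} (hH : H ≠ 0) (lam : ℂ) (k : ℕ) :
    ∫ θ in (0 : ℝ)..H, Complex.exp (lam * (H - θ)) * (((θ / H) ^ k : ℝ) : ℂ) =
      H * phi (k + 1) (lam * H) := by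
  have hHc : (H : ℂ) ≠ 0 := Complex.ofReal_ne_zero.2 hH
  calc ∫ θ in (0 : ℝ)..H, Complex.exp (lam * (H - θ)) * (((θ / H) ^ k : ℝ) : ℂ)
      = ∫ θ in (0 : ℝ)..H,
          Complex.exp (lam * H * (1 - ((θ / H : ℝ) : ℂ))) * ((θ / H : ℝ) : ℂ) ^ k := by
        congr 1 with θ
        push_cast
        congr 2
        field_simp
    _ = H * phi (k + 1) (lam * H) := by
        rw [intervalIntegral.integral_comp_div
          (fun t : ℝ ↦ Complex.exp (lam * H * (1 - (t : ℂ))) * (t : ℂ) ^ k) hH,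
          zero_div, div_self hH, Complex.real_smul, phi]

section LinearODE

variable {E : Type*} [NormedAddCommGroup E] [NormedSpace ℂ E]

theorem hasDerivWithinAt_cexp_integratingFactor_smul {v : ℝ → E} {lam : ℂ} {y : E}
    {s : Set ℝ} {θ : ℝ} (b : ℝ) (hv : HasDerivWithinAt v (lam • v θ + y) s θ) :
    HasDerivWithinAt (fun t : ℝ ↦ Complex.exp (lam * (b - t)) • v t)
      (Complex.exp (lam * (b - θ)) • y) s θ := by
  have hexp : HasDerivAt (fun t : ℝ ↦ Complex.exp (lam * (b - t)))
      (Complex.exp (lam * (b - θ)) * (lam * -1)) θ :=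
    (((hasDerivAt_id θ).ofReal_comp.const_sub (b : ℂ)).const_mul lam).cexp
  refine (hexp.hasDerivWithinAt.smul hv).congr_deriv ?_
  module

theorem variation_of_constants {ι : Type*} {s : Finset ι} {a b : ℝ} {lam : ℂ} {v : ℝ → E}
    {f : ι → ℝ → ℂ} {g : ι → E} (hv : ContinuousOn v [[a, b]])
    (hv' : ∀ θ ∈ Ioo (min a b) (max a b),
      HasDerivWithinAt v (lam • v θ + ∑ k ∈ s, f k θ • g k) (Ioi θ) θ)
    (hf : ∀ k ∈ s, IntervalIntegrable (f k) volume a b) :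
    v b = Complex.exp (lam * (b - a)) • v a +
      ∑ k ∈ s, (∫ θ in a..b, Complex.exp (lam * (b - θ)) * f k θ) • g k := by
  have hexp : Continuous fun θ : ℝ ↦ Complex.exp (lam * (b - θ)) := by fun_prop
  have hw' : ∀ θ ∈ Ioo (min a b) (max a b),
      HasDerivWithinAt (fun t : ℝ ↦ Complex.exp (lam * (b - t)) • v t)
        (∑ k ∈ s, (Complex.exp (lam * (b - θ)) * f k θ) • g k) (Ioi θ) θ := fun θ hθ ↦ by
    simpa only [Finset.smul_sum, smul_smul] using
      hasDerivWithinAt_cexp_integratingFactor_smul b (hv' θ hθ)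
  have hw := sub_eq_sum_integral_smul_of_hasDeriv_right (hexp.continuousOn.smul hv) hw'
    fun k hk ↦ (hf k hk).continuousOn_mul hexp.continuousOn
  simpa only [Pi.smul_apply', sub_self, mul_zero, Complex.exp_zero, one_smul] using
    sub_eq_iff_eq_add'.1 hw

theorem stmt_5_general {H : ℝ} (hH : H ≠ 0) (lam : ℂ) (K : ℕ) (g : Fin (K + 1) → E) (v : ℝ → E)
    (hv : ∀ θ ∈ [[0, H]],
      HasDerivWithinAt v
        (lam • v θ + ∑ k : Fin (K + 1), ((((θ / H) ^ (k : ℕ) : ℝ)) : ℂ) • g k) [[0, H]] θ) :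
    v H = Complex.exp (lam * H) • v 0 +
      (H : ℂ) • ∑ k : Fin (K + 1), phi ((k : ℕ) + 1) (lam * H) • g k := by
  have hv' : ∀ θ ∈ Ioo (min 0 H) (max 0 H), HasDerivWithinAt v
      (lam • v θ + ∑ k : Fin (K + 1), ((((θ / H) ^ (k : ℕ) : ℝ)) : ℂ) • g k) (Ioi θ) θ :=
    fun θ hθ ↦ ((hv θ (Ioo_subset_Icc_self hθ)).hasDerivAt
      (Icc_mem_nhds hθ.1 hθ.2)).hasDerivWithinAt
  have hf : ∀ k ∈ (Finset.univ : Finset (Fin (K + 1))),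
      IntervalIntegrable (fun θ : ℝ ↦ (((θ / H) ^ (k : ℕ) : ℝ) : ℂ)) volume 0 H :=
    fun k _ ↦ Continuous.intervalIntegrable (by fun_prop) 0 H
  have hvH := variation_of_constants (fun θ hθ ↦ (hv θ hθ).continuousWithinAt) hv' hf
  simpa only [Complex.ofReal_zero, sub_zero, integral_cexp_mul_div_pow hH, Finset.smul_sum,
    smul_smul] using hvH

end LinearODE

/-- Exact-solution formula for the modified fast ODE with polynomial slow forcing. -/
theorem stmt_5 (d : ℕ) (H : ℝ) (hH : 0 < H) (lam : ℂ) (K : ℕ)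
    (g : Fin (K + 1) → Fin d → ℂ) (v : ℝ → Fin d → ℂ)
    (hv : ∀ θ ∈ Set.Icc (0 : ℝ) H,
      HasDerivWithinAt v
        (lam • v θ + ∑ k : Fin (K + 1), ((((θ / H) ^ (k : ℕ) : ℝ)) : ℂ) • g k)
        (Set.Icc 0 H) θ) :
    v H = Complex.exp (lam * H) • v 0 +
      (H : ℂ) • ∑ k : Fin (K + 1), phi ((k : ℕ) + 1) (lam * H) • g k := by
  rw [← uIcc_of_le hH.le] at hv
  exact stmt_5_general hH.ne' lam K g v hv
end

section
/- Let H > 0, λ ∈ ℂ, K ∈ ℕ, let a, b₀, …, b_K ∈ ℂ^d, and let v : ℝ → ℂ^d be differentiable on [0, H] with v′(θ) = λ v(θ) + a + Σ_{k=0}^K (1/(k+1)) (θ/H)^{k+1} b_k for all θ ∈ [0, H]. Then v(H) = e^{λH} v(0) + H φ₁(λH) a + H Σ_{k=0}^K (φ_{k+2}(λH)/(k+1)) b_k. (This formula, with the coefficients μ̃ and ν̃ built from φ_{k+2}/(k+1), underlies the matrix stability analysis of coupled MRI-GARK methods.) -/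
/-!
Duhamel's formula writes `v H` as `e^{λH} v 0` plus the integral over `[0, H]` of `e^{λ(H - θ)}`
times the forcing. When the forcing is a polynomial in `θ / H`, the substitution `t = θ / H` turns
the contribution of the `n`-th power into `H φ_{n+1}(λH)`.
-/

open Set MeasureTheory

theorem hasDerivAt_exp_mul_sub (lam : ℂ) (T θ : ℝ) :
    HasDerivAt (fun t : ℝ => Complex.exp (lam * (T - t)))
      (-(Complex.exp (lam * (T - θ)) * lam)) θ := by
  have h_exponent : HasDerivAt (fun t : ℝ => lam * ((T : ℂ) - t)) (lam * -1) θ :=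
    ((hasDerivAt_id θ).ofReal_comp.const_sub (T : ℂ)).const_mul lam
  simpa only [mul_neg, mul_one] using h_exponent.cexp

section Duhamel

variable {E : Type*} [NormedAddCommGroup E] [NormedSpace ℂ E] {lam : ℂ} {S T : ℝ} {v : ℝ → E}

theorem eq_exp_smul_add_integral_of_hasDerivAt [CompleteSpace E] {f : ℝ → E} (hST : S ≤ T)
    (hf : IntervalIntegrable f volume S T) (hv : ContinuousOn v (Icc S T))
    (hv' : ∀ θ ∈ Ioo S T, HasDerivAt v (lam • v θ + f θ) θ) :
    v T = Complex.exp (lam * (T - S)) • v S +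
      ∫ θ in S..T, Complex.exp (lam * (T - θ)) • f θ := by
  have h_exp : Continuous fun θ : ℝ => Complex.exp (lam * (T - θ)) := by fun_prop
  have h_deriv : ∀ θ ∈ Ioo S T, HasDerivAt (fun t : ℝ => Complex.exp (lam * (T - t)) • v t)
      (Complex.exp (lam * (T - θ)) • f θ) θ := fun θ hθ =>
    ((hasDerivAt_exp_mul_sub lam T θ).smul (hv' θ hθ)).congr_deriv (by module)
  have h_cont : ContinuousOn (fun t : ℝ => Complex.exp (lam * (T - t)) • v t) (Icc S T) :=
    h_exp.continuousOn.smul hv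
  rw [intervalIntegral.integral_eq_sub_of_hasDerivAt_of_le hST h_cont h_deriv
    (hf.continuousOn_smul h_exp.continuousOn)]
  rw [sub_self, mul_zero, Complex.exp_zero, one_smul, add_sub_cancel]

-- The coefficient integrals are scalar, so the identity descends from the completion of `E`.
theorem eq_exp_smul_add_sum_integral_smul_of_hasDerivAt {ι : Type*} [Fintype ι] {g : ι → ℝ → ℂ}
    {c : ι → E} (hST : S ≤ T) (hg : ∀ i, IntervalIntegrable (g i) volume S T)
    (hv : ContinuousOn v (Icc S T))
    (hv' : ∀ θ ∈ Ioo S T, HasDerivAt v (lam • v θ + ∑ i, g i θ • c i) θ) :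
    v T = Complex.exp (lam * (T - S)) • v S +
      ∑ i, (∫ θ in S..T, Complex.exp (lam * (T - θ)) * g i θ) • c i := by
  let toCompl : E →L[ℂ] UniformSpace.Completion E := UniformSpace.Completion.toComplL
  have h_inj : Function.Injective toCompl := UniformSpace.Completion.coe_injective E
  have h_integrable : ∀ i, IntervalIntegrable (fun θ => g i θ • toCompl (c i)) volume S T :=
    fun i => (hg i).smul_continuousOn continuousOn_const
  have h_exp : Continuous fun θ : ℝ => Complex.exp (lam * (T - θ)) := by fun_prop
  have h_deriv : ∀ θ ∈ Ioo S T, HasDerivAt (fun t => toCompl (v t))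
      (lam • toCompl (v θ) + ∑ i, g i θ • toCompl (c i)) θ := fun θ hθ => by
    simpa only [ContinuousLinearMap.coe_restrictScalars', map_add, map_sum, map_smul] using!
      (toCompl.restrictScalars ℝ).hasFDerivAt.comp_hasDerivAt θ (hv' θ hθ)
  have h_duhamel := eq_exp_smul_add_integral_of_hasDerivAt (v := fun t => toCompl (v t)) hST
    (by simpa only [Finset.sum_fn] using IntervalIntegrable.sum _ fun i _ => h_integrable i)
    (toCompl.continuous.comp_continuousOn hv) h_deriv
  simp only [Finset.smul_sum] at h_duhamel
  rw [intervalIntegral.integral_finsetSum fun i _ =>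
    (h_integrable i).continuousOn_smul h_exp.continuousOn] at h_duhamel
  apply h_inj
  simpa only [smul_smul, intervalIntegral.integral_smul_const, map_add, map_sum, map_smul]
    using h_duhamel

end Duhamel

theorem integral_exp_mul_sub_mul_div_pow {H : ℝ} (hH : H ≠ 0) (lam : ℂ) (n : ℕ) :
    ∫ θ in (0 : ℝ)..H, Complex.exp (lam * (H - θ)) * ((θ / H : ℝ) : ℂ) ^ n =
      H * phi (n + 1) (lam * H) := by
  have h_subst := intervalIntegral.integral_comp_div (a := 0) (b := H)
    (fun t : ℝ => Complex.exp (lam * H * (1 - t)) * (t : ℂ) ^ n) hH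
  rw [zero_div, div_self hH, Complex.real_smul] at h_subst
  rw [phi, ← h_subst]
  congr! 4 with θ
  have hH' : (H : ℂ) ≠ 0 := Complex.ofReal_ne_zero.mpr hH
  push_cast
  field_simp

theorem eq_exp_smul_add_sum_phi_smul_of_hasDerivAt {E : Type*} [NormedAddCommGroup E]
    [NormedSpace ℂ E] {H : ℝ} (hH : 0 < H) {lam : ℂ} {N : ℕ} {c : Fin N → E} {v : ℝ → E}
    (hv : ContinuousOn v (Icc 0 H))
    (hv' : ∀ θ ∈ Ioo 0 H,
      HasDerivAt v (lam • v θ + ∑ n : Fin N, ((θ / H : ℝ) : ℂ) ^ (n : ℕ) • c n) θ) :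
    v H = Complex.exp (lam * H) • v 0 +
      (H : ℂ) • ∑ n : Fin N, phi ((n : ℕ) + 1) (lam * H) • c n := by
  have h_duhamel := eq_exp_smul_add_sum_integral_smul_of_hasDerivAt hH.le
    (fun n => Continuous.intervalIntegrable (by fun_prop) _ _) hv hv'
  simpa only [integral_exp_mul_sub_mul_div_pow hH.ne', Complex.ofReal_zero, sub_zero, mul_smul,
    ← Finset.smul_sum] using h_duhamel

theorem stmt_6_general {E : Type*} [NormedAddCommGroup E] [NormedSpace ℂ E] (H : ℝ) (hH : 0 < H)
    (lam : ℂ) (K : ℕ) (a : E) (b : Fin (K + 1) → E) (v : ℝ → E)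
    (hv : ∀ θ ∈ Icc (0 : ℝ) H,
      HasDerivWithinAt v
        (lam • v θ + a + ∑ k : Fin (K + 1),
          (((1 / ((k : ℕ) + 1) * (θ / H) ^ ((k : ℕ) + 1) : ℝ)) : ℂ) • b k)
        (Icc 0 H) θ) :
    v H = Complex.exp (lam * H) • v 0 + ((H : ℂ) * phi 1 (lam * H)) • a +
      (H : ℂ) • ∑ k : Fin (K + 1),
        (phi ((k : ℕ) + 2) (lam * H) / ((k : ℕ) + 1)) • b k := by
  let c : Fin (K + 2) → E := Fin.cons a fun k => (1 / ((k : ℂ) + 1)) • b k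
  have h_deriv : ∀ θ ∈ Ioo 0 H, HasDerivAt v
      (lam • v θ + ∑ n : Fin (K + 2), ((θ / H : ℝ) : ℂ) ^ (n : ℕ) • c n) θ := fun θ hθ => by
    refine ((hv θ (Ioo_subset_Icc_self hθ)).hasDerivAt (Icc_mem_nhds hθ.1 hθ.2)).congr_deriv ?_
    simp [c, Fin.sum_univ_succ (n := K + 1), smul_smul, add_assoc, mul_comm]
  rw [eq_exp_smul_add_sum_phi_smul_of_hasDerivAt hH
    (fun θ hθ => (hv θ hθ).continuousWithinAt) h_deriv]
  simp [c, Fin.sum_univ_succ (n := K + 1), smul_smul, add_assoc, div_eq_mul_inv]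

/-- Exact-solution formula underlying the matrix stability analysis of coupled
MRI-GARK methods. -/
theorem stmt_6 (d : ℕ) (H : ℝ) (hH : 0 < H) (lam : ℂ) (K : ℕ)
    (a : Fin d → ℂ) (b : Fin (K + 1) → Fin d → ℂ) (v : ℝ → Fin d → ℂ)
    (hv : ∀ θ ∈ Set.Icc (0 : ℝ) H,
      HasDerivWithinAt v
        (lam • v θ + a + ∑ k : Fin (K + 1),
          (((1 / ((k : ℕ) + 1) * (θ / H) ^ ((k : ℕ) + 1) : ℝ)) : ℂ) • b k)
        (Set.Icc 0 H) θ) :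
    v H = Complex.exp (lam * H) • v 0 + ((H : ℂ) * phi 1 (lam * H)) • a +
      (H : ℂ) • ∑ k : Fin (K + 1),
        (phi ((k : ℕ) + 2) (lam * H) / ((k : ℕ) + 1)) • b k := by
  exact stmt_6_general H hH lam K a b v hv
end

section
/- Let A ∈ ℝ^{s×s}, let γ_j(t) = Σ_{k=0}^K γ_j^k t^k for j = 1, …, s, let H > 0, λ^F, λ^S ∈ ℂ, and set z^F = Hλ^F, z^S = Hλ^S, z = z^F + z^S. Assume I − zA is invertible. Let y_n ∈ ℂ, set Y = (I − zA)^{−1}𝟙 · y_n ∈ ℂ^s, and let v : ℝ → ℂ be differentiable on [0, H] with v(0) = y_n and v′(θ) = λ^F v(θ) + λ^S Σ_{j=1}^s γ_j(θ/H) Y_j for all θ ∈ [0, H]. Then v(H) = R(z^F, z^S) · y_n, where R(z^F, z^S) = φ₀(z^F) + z^S μ(z^F)ᵀ (I − zA)^{−1}𝟙. (This is the scalar linear stability function of a step predictor-corrector MRI-GARK method applied to y′ = λ^F y + λ^S y.) -/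
/-!
The inner problem is a linear equation `v' = λ v + f` whose forcing is a polynomial in
`θ / H`. Multiplying by the integrating factor `e^{λ(H - θ)}` gives the variation-of-constants
formula, and after the substitution `θ = H t` the monomial `(θ / H) ^ k` contributes exactly
`H φ_{k+1}(H λ)`. Linearity in the stage values then produces the stability function.
-/

open MeasureTheory Set

section VariationOfConstants

variable {E : Type*} [NormedAddCommGroup E] [NormedSpace ℂ E]

theorem hasDerivAt_exp_mul_sub_smul (lam : ℂ) (b : ℝ) {v : ℝ → E} {w : E} {t : ℝ}
    (hv : HasDerivAt v (lam • v t + w) t) :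
    HasDerivAt (fun t : ℝ ↦ Complex.exp (lam * (b - t)) • v t)
      (Complex.exp (lam * (b - t)) • w) t := by
  have exp_deriv : HasDerivAt (fun t : ℝ ↦ Complex.exp (lam * (b - t)))
      (Complex.exp (lam * (b - t)) * (lam * -1)) t :=
    ((Complex.ofRealCLM.hasDerivAt.const_sub (b : ℂ)).const_mul lam).cexp
  exact (exp_deriv.smul hv).congr_deriv (by module)

theorem eq_exp_smul_add_integral_of_hasDerivWithinAt [CompleteSpace E] {lam : ℂ} {a b : ℝ}
    (hab : a ≤ b) {v f : ℝ → E} (hf : IntervalIntegrable f volume a b)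
    (hv : ∀ t ∈ Icc a b, HasDerivWithinAt v (lam • v t + f t) (Icc a b) t) :
    v b = Complex.exp (lam * (b - a)) • v a +
      ∫ t in a..b, Complex.exp (lam * (b - t)) • f t := by
  have continuousOn_v : ContinuousOn v (Icc a b) := fun t ht ↦ (hv t ht).continuousWithinAt
  have integral_eq : ∫ t in a..b, Complex.exp (lam * (b - t)) • f t =
      Complex.exp (lam * (b - b)) • v b - Complex.exp (lam * (b - a)) • v a :=
    intervalIntegral.integral_eq_sub_of_hasDerivAt_of_le
      (f := fun t : ℝ ↦ Complex.exp (lam * (b - t)) • v t) hab (by fun_prop)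
      (fun t ht ↦ hasDerivAt_exp_mul_sub_smul lam b
        ((hv t (Ioo_subset_Icc_self ht)).hasDerivAt (Icc_mem_nhds ht.1 ht.2)))
      (hf.continuousOn_smul (by fun_prop))
  rw [integral_eq, sub_self, mul_zero, Complex.exp_zero, one_smul, add_sub_cancel]

end VariationOfConstants

section PolynomialForcing

theorem integral_exp_mul_div_pow (lam : ℂ) {H : ℝ} (hH : H ≠ 0) (k : ℕ) :
    ∫ θ in (0 : ℝ)..H, Complex.exp (lam * (H - θ)) * ((θ / H : ℝ) : ℂ) ^ k =
      H * phi (k + 1) (H * lam) := by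
  have substitution := intervalIntegral.smul_integral_comp_mul_left
    (a := 0) (b := 1) (fun θ : ℝ ↦ Complex.exp (lam * (H - θ)) * ((θ / H : ℝ) : ℂ) ^ k) H
  rw [mul_zero, mul_one, Complex.real_smul] at substitution
  rw [← substitution, phi]
  congr 2 with t
  rw [mul_div_cancel_left₀ t hH]
  push_cast
  ring_nf

variable {E : Type*} [NormedAddCommGroup E] [NormedSpace ℂ E] [CompleteSpace E]

theorem integral_exp_smul_sum_div_pow_smul (lam : ℂ) {H : ℝ} (hH : H ≠ 0) {n : ℕ}
    (c : Fin n → E) :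
    ∫ θ in (0 : ℝ)..H,
        Complex.exp (lam * (H - θ)) • ∑ k : Fin n, ((θ / H : ℝ) : ℂ) ^ (k : ℕ) • c k =
      (H : ℂ) • ∑ k : Fin n, phi (k + 1) (H * lam) • c k := by
  simp only [Finset.smul_sum, smul_smul]
  rw [intervalIntegral.integral_finsetSum
    fun k _ ↦ Continuous.intervalIntegrable (by fun_prop) 0 H]
  simp only [intervalIntegral.integral_smul_const, integral_exp_mul_div_pow lam hH]

theorem eq_phi_smul_of_hasDerivWithinAt_sum_div_pow {lam : ℂ} {H : ℝ} (hH : 0 < H) {n : ℕ}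
    {c : Fin n → E} {v : ℝ → E}
    (hv : ∀ θ ∈ Icc 0 H, HasDerivWithinAt v
      (lam • v θ + ∑ k : Fin n, ((θ / H : ℝ) : ℂ) ^ (k : ℕ) • c k) (Icc 0 H) θ) :
    v H = phi 0 (H * lam) • v 0 + (H : ℂ) • ∑ k : Fin n, phi (k + 1) (H * lam) • c k := by
  rw [eq_exp_smul_add_integral_of_hasDerivWithinAt hH.le
      (Continuous.intervalIntegrable (by fun_prop) 0 H) hv,
    integral_exp_smul_sum_div_pow_smul lam hH.ne', phi, Complex.ofReal_zero, sub_zero, mul_comm]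

theorem stmt_7_general {ι : Type*} [Fintype ι] {n : ℕ} (γ : ι → Fin n → ℂ) {H : ℝ} (hH : 0 < H)
    (lamF lamS : ℂ) (Y : ι → E) {v : ℝ → E}
    (hv : ∀ θ ∈ Icc 0 H, HasDerivWithinAt v
      (lamF • v θ + lamS • ∑ j, (∑ k : Fin n, γ j k * ((θ / H : ℝ) : ℂ) ^ (k : ℕ)) • Y j)
      (Icc 0 H) θ) :
    v H = phi 0 (H * lamF) • v 0 +
      (H * lamS) • ∑ j, (∑ k : Fin n, phi (k + 1) (H * lamF) * γ j k) • Y j := by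
  have sum_stages_comm (x : Fin n → ℂ) :
      lamS • ∑ j, (∑ k, x k * γ j k) • Y j = ∑ k, x k • lamS • ∑ j, γ j k • Y j := by
    simp only [Finset.sum_smul, Finset.smul_sum]
    rw [Finset.sum_comm]
    exact Finset.sum_congr rfl fun k _ ↦ Finset.sum_congr rfl fun j _ ↦ by module
  rw [mul_smul, sum_stages_comm]
  refine eq_phi_smul_of_hasDerivWithinAt_sum_div_pow hH fun θ hθ ↦ ?_
  rw [← sum_stages_comm]
  simpa only [mul_comm] using hv θ hθ

end PolynomialForcing

/-- Scalar linear stability function of a step predictor-corrector MRI-GARK method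
applied to y′ = λ^F y + λ^S y. -/
theorem stmt_7 (s K : ℕ) (hs : 1 ≤ s) (A : Matrix (Fin s) (Fin s) ℝ)
    (γ : Fin s → Fin (K + 1) → ℝ) (H : ℝ) (hH : 0 < H) (lamF lamS : ℂ)
    (zF zS z : ℂ) (hzF : zF = H * lamF) (hzS : zS = H * lamS) (hz : z = zF + zS)
    (hinv : IsUnit (1 - z • A.map (Complex.ofReal)).det)
    (yn : ℂ) (Y : Fin s → ℂ)
    (hY : Y = yn • (1 - z • A.map (Complex.ofReal))⁻¹.mulVec (fun _ => 1))
    (v : ℝ → ℂ) (hv0 : v 0 = yn)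
    (hv : ∀ θ ∈ Set.Icc (0 : ℝ) H,
      HasDerivWithinAt v
        (lamF * v θ + lamS * ∑ j,
          (∑ k : Fin (K + 1), ((γ j k : ℝ) : ℂ) * (((θ / H : ℝ)) : ℂ) ^ (k : ℕ)) * Y j)
        (Set.Icc 0 H) θ) :
    v H = (phi 0 zF + zS * ∑ j,
        (∑ k : Fin (K + 1), phi ((k : ℕ) + 1) zF * ((γ j k : ℝ) : ℂ)) *
          ((1 - z • A.map (Complex.ofReal))⁻¹.mulVec (fun _ => 1)) j) * yn := by
  have v_H := stmt_7_general (fun j k ↦ (γ j k : ℂ)) hH lamF lamS Y hv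
  simp only [v_H, hv0, hY, hzF, hzS, Pi.smul_apply, smul_eq_mul, add_mul, mul_assoc,
    Finset.sum_mul, mul_comm yn]
end

section
/- Let A ∈ ℝ^{s×s} be invertible and γ^0, …, γ^K ∈ ℝ^s, and fix z^S ∈ ℂ. Then for all sufficiently negative real x the matrix I − (x + z^S)A is invertible, so that R(x, z^S) = φ₀(x) + z^S μ(x)ᵀ (I − (x + z^S)A)^{−1}𝟙 is defined, and R(x, z^S) → 0 as x → −∞. (Fast stiff limit of the scalar stability function of a step predictor-corrector MRI-GARK method.) -/
/-!
The inverse of `I - z A` is, up to the constant factor `-A⁻¹`, the resolvent of `A⁻¹` at `z`, and a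
resolvent exists near infinity and vanishes there. Since `|φₖ₊₁| ≤ 1` on the closed left half-plane,
the weights `μ` stay bounded as `Re z → -∞`, so their product with the inverse tends to zero, as
does `φ₀ = exp`.
-/

open Filter Bornology Topology
open scoped Matrix

section Resolvent

theorem inverse_one_sub_smul_unit {R A : Type*} [CommRing R] [Ring A] [Algebra R A]
    (u : Aˣ) (r : R) :
    Ring.inverse (1 - r • (u : A)) = -↑u⁻¹ * resolvent (↑u⁻¹ : A) r := by
  have factorization : 1 - r • (u : A) = (algebraMap R A r - ↑u⁻¹) * ↑(-u) := by
    rw [Units.val_neg, mul_neg, sub_mul, Units.inv_mul, neg_sub, Algebra.smul_def]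
  rw [factorization, Ring.inverse_mul (.inr (-u).isUnit), Ring.inverse_unit, inv_neg,
    Units.val_neg, resolvent]

variable {𝕜 A : Type*} [NontriviallyNormedField 𝕜] [NormedRing A] [NormedAlgebra 𝕜 A]
  [CompleteSpace A]

theorem eventually_isUnit_one_sub_smul_cobounded {a : A} (ha : IsUnit a) :
    ∀ᶠ z in cobounded 𝕜, IsUnit (1 - z • a) := by
  obtain ⟨u, rfl⟩ := ha
  filter_upwards [spectrum.eventually_isUnit_resolvent (𝕜 := 𝕜) (↑u⁻¹ : A)] with z hz
  rw [← isUnit_ringInverse, inverse_one_sub_smul_unit]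
  exact (-u⁻¹).isUnit.mul hz

theorem tendsto_inverse_one_sub_smul_cobounded {a : A} (ha : IsUnit a) :
    Tendsto (fun z : 𝕜 => Ring.inverse (1 - z • a)) (cobounded 𝕜) (𝓝 0) := by
  obtain ⟨u, rfl⟩ := ha
  simp only [inverse_one_sub_smul_unit]
  simpa only [mul_zero] using
    (spectrum.resolvent_tendsto_cobounded (𝕜 := 𝕜) (↑u⁻¹ : A)).const_mul (-↑u⁻¹ : A)

end Resolvent

section Matrix

variable {ι : Type*} [Fintype ι]

theorem tendsto_dotProduct_zero_of_isBoundedUnder {α R : Type*} [NonUnitalSeminormedRing R]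
    {l : Filter α} {v w : α → ι → R}
    (hv : ∀ j, IsBoundedUnder (· ≤ ·) l fun x => ‖v x j‖) (hw : Tendsto w l (𝓝 0)) :
    Tendsto (fun x => v x ⬝ᵥ w x) l (𝓝 0) := by
  rw [← Finset.sum_const_zero (ι := ι) (s := Finset.univ)]
  exact tendsto_finsetSum _ fun j _ => isBoundedUnder_le_mul_tendsto_zero (hv j) (hw.apply_nhds j)

variable [DecidableEq ι]

theorem isUnit_det_map {R S : Type*} [CommRing R] [CommRing S] (f : R →+* S)
    {A : Matrix ι ι R} (hA : IsUnit A.det) : IsUnit (A.map f).det :=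
  f.map_det A ▸ hA.map f

-- The operator-norm uniformity unfolds to the entrywise one, but instance search does not see it.
theorem completeSpace_linftyOpNormedRing {R : Type*} [NormedRing R] [CompleteSpace R] :
    @CompleteSpace (Matrix ι ι R)
      Matrix.linftyOpNormedRing.toPseudoMetricSpace.toUniformSpace :=
  Matrix.instCompleteSpace ι ι R

variable {𝕜 : Type*} [NontriviallyNormedField 𝕜] [CompleteSpace 𝕜]

theorem eventually_isUnit_det_one_sub_smul_cobounded {A : Matrix ι ι 𝕜} (hA : IsUnit A.det) :
    ∀ᶠ z in cobounded 𝕜, IsUnit (1 - z • A).det := by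
  simp only [← Matrix.isUnit_iff_isUnit_det] at hA ⊢
  open scoped Matrix.Norms.Operator in
  exact
    have := completeSpace_linftyOpNormedRing (ι := ι) (R := 𝕜)
    eventually_isUnit_one_sub_smul_cobounded hA

theorem tendsto_inv_one_sub_smul_cobounded {A : Matrix ι ι 𝕜} (hA : IsUnit A.det) :
    Tendsto (fun z : 𝕜 => (1 - z • A)⁻¹) (cobounded 𝕜) (𝓝 0) := by
  simp only [Matrix.nonsing_inv_eq_ringInverse]
  open scoped Matrix.Norms.Operator in
  exact
    have := completeSpace_linftyOpNormedRing (ι := ι) (R := 𝕜)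
    tendsto_inverse_one_sub_smul_cobounded (A.isUnit_iff_isUnit_det.mpr hA)

theorem tendsto_inv_one_sub_smul_mulVec_cobounded {A : Matrix ι ι 𝕜} (hA : IsUnit A.det)
    (v : ι → 𝕜) : Tendsto (fun z : 𝕜 => (1 - z • A)⁻¹ *ᵥ v) (cobounded 𝕜) (𝓝 0) := by
  have mulVec_continuous : Continuous fun M : Matrix ι ι 𝕜 => M *ᵥ v := by fun_prop
  exact (mulVec_continuous.tendsto' 0 0 (Matrix.zero_mulVec v)).comp
    (tendsto_inv_one_sub_smul_cobounded hA)

end Matrix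

section LeftHalfPlane

theorem comap_re_atBot_le_cobounded : comap Complex.re atBot ≤ cobounded ℂ :=
  tendsto_id'.mp <| tendsto_norm_atTop_iff_cobounded.mp <|
    tendsto_atTop_mono Complex.abs_re_le_norm (tendsto_abs_atBot_atTop.comp tendsto_comap)

theorem tendsto_ofReal_atBot_comap_re : Tendsto Complex.ofReal atBot (comap Complex.re atBot) :=
  tendsto_comap_iff.mpr tendsto_id

theorem norm_phi_succ_le_one (k : ℕ) {z : ℂ} (hz : z.re ≤ 0) : ‖phi (k + 1) z‖ ≤ 1 := by
  have norm_integrand_le : ∀ t ∈ Set.uIoc (0 : ℝ) 1,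
      ‖Complex.exp (z * (1 - (t : ℂ))) * (t : ℂ) ^ k‖ ≤ 1 := by
    intro t ht
    obtain ⟨t_pos, t_le_one⟩ := Set.uIoc_of_le (zero_le_one' ℝ) ▸ ht
    have norm_exp_le : ‖Complex.exp (z * (1 - (t : ℂ)))‖ ≤ 1 := by
      rw [Complex.norm_exp, Real.exp_le_one_iff, ← Complex.ofReal_one, ← Complex.ofReal_sub,
        Complex.re_mul_ofReal]
      exact mul_nonpos_of_nonpos_of_nonneg hz (sub_nonneg.mpr t_le_one)
    have norm_pow_le : ‖(t : ℂ) ^ k‖ ≤ 1 := by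
      rw [norm_pow, Complex.norm_of_nonneg t_pos.le]
      exact pow_le_one₀ t_pos.le t_le_one
    exact (norm_mul_le_of_le norm_exp_le norm_pow_le).trans_eq (one_mul 1)
  simpa [phi] using intervalIntegral.norm_integral_le_of_norm_le_const norm_integrand_le

end LeftHalfPlane

section StabilityFunction

variable {ι : Type*} {n : ℕ}

/-- The weight vector `μ(z) = ∑ₖ φₖ₊₁(z) γᵏ` of the stability function, with `n = K + 1` coefficient
vectors, allowed to be complex. -/
noncomputable def phiWeights (γ : Fin n → ι → ℂ) (z : ℂ) : ι → ℂ :=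
  fun j => ∑ k : Fin n, phi (k + 1) z * γ k j

theorem isBoundedUnder_norm_phiWeights (γ : Fin n → ι → ℂ) (j : ι) :
    IsBoundedUnder (· ≤ ·) (comap Complex.re atBot) fun z => ‖phiWeights γ z j‖ := by
  refine isBoundedUnder_of_eventually_le (a := ∑ k, ‖γ k j‖) ?_
  filter_upwards [tendsto_comap.eventually_le_atBot 0] with z hz
  refine norm_sum_le_of_le _ fun k _ => ?_
  rw [norm_mul]
  exact mul_le_of_le_one_left (norm_nonneg _) (norm_phi_succ_le_one k hz)

variable [Fintype ι] [DecidableEq ι]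

/-- The scalar stability function `R(zF, zS)` of a step predictor-corrector MRI-GARK method with
slow base coefficient matrix `A`. It is meaningful only where `1 - (zF + zS) • A` is invertible:
elsewhere the matrix inverse is `0`. -/
noncomputable def stabilityFunction (A : Matrix ι ι ℂ) (γ : Fin n → ι → ℂ) (zF zS : ℂ) : ℂ :=
  phi 0 zF + zS * phiWeights γ zF ⬝ᵥ ((1 - (zF + zS) • A)⁻¹ *ᵥ 1)

theorem stmt_8_general {A : Matrix ι ι ℂ} (hA : IsUnit A.det) (γ : Fin n → ι → ℂ) (zS : ℂ) :
    (∀ᶠ zF in comap Complex.re atBot, IsUnit (1 - (zF + zS) • A).det) ∧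
      Tendsto (fun zF => stabilityFunction A γ zF zS) (comap Complex.re atBot) (𝓝 0) := by
  have add_zS_tendsto : Tendsto (· + zS) (comap Complex.re atBot) (cobounded ℂ) :=
    (tendsto_add_const_cobounded zS).mono_left comap_re_atBot_le_cobounded
  have slow_part_tendsto := tendsto_dotProduct_zero_of_isBoundedUnder
    (isBoundedUnder_norm_phiWeights γ)
    ((tendsto_inv_one_sub_smul_mulVec_cobounded hA 1).comp add_zS_tendsto)
  refine ⟨add_zS_tendsto.eventually (eventually_isUnit_det_one_sub_smul_cobounded hA), ?_⟩
  have sum_tendsto := Complex.tendsto_exp_comap_re_atBot.add (slow_part_tendsto.const_mul zS)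
  rwa [mul_zero, add_zero] at sum_tendsto

end StabilityFunction

/-- Fast stiff limit of the scalar stability function of a step
predictor-corrector MRI-GARK method: R(x, z^S) → 0 as x → −∞. -/
theorem stmt_8 (s K : ℕ) (hs : 1 ≤ s) (A : Matrix (Fin s) (Fin s) ℝ)
    (hA : IsUnit A.det) (γ : Fin (K + 1) → Fin s → ℝ) (zS : ℂ) :
    (∃ x₀ : ℝ, ∀ x : ℝ, x ≤ x₀ →
      IsUnit (1 - ((x : ℂ) + zS) • A.map Complex.ofReal).det) ∧
    Filter.Tendsto
      (fun x : ℝ => phi 0 (x : ℂ) + zS * ∑ j,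
        (∑ k : Fin (K + 1), phi ((k : ℕ) + 1) (x : ℂ) * ((γ k j : ℝ) : ℂ)) *
          ((1 - ((x : ℂ) + zS) • A.map Complex.ofReal)⁻¹.mulVec (fun _ => 1)) j)
      Filter.atBot (nhds 0) := by
  obtain ⟨isUnit_det, tendsto_zero⟩ :=
    stmt_8_general (isUnit_det_map Complex.ofRealHom hA) (fun k j => (γ k j : ℂ)) zS
  exact ⟨eventually_atBot.mp (tendsto_ofReal_atBot_comap_re.eventually isUnit_det),
    tendsto_zero.comp tendsto_ofReal_atBot_comap_re⟩
end

section
/- Let A ∈ ℝ^{s×s} be invertible and γ^0, …, γ^K ∈ ℝ^s. Then the function z ↦ φ₀(z) − μ(z)ᵀ A^{−1}𝟙 does not vanish identically on (−∞, 0): there exists a real z < 0 with φ₀(z) − μ(z)ᵀ A^{−1}𝟙 ≠ 0. (Consequently the slow stiff limit of the stability function of a step predictor-corrector MRI-GARK method cannot be zero for all fast arguments, due to the linear independence of the φ-functions.) -/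
/-!
Factoring out `e^z`, a combination of `φ₁, …, φₙ` is `e^z` times the Laplace transform `L` of a
polynomial cut off to `[0, 1]`. If it agreed with `φ₀ = e^z` on an open set of reals, then `L = 1`
there, hence on the whole real line since `L` is entire; but `L(x) → 0` as `x → +∞`.
-/

open Filter Topology MeasureTheory Set

section TruncLaplace

variable {E : Type*} [NormedAddCommGroup E] [NormedSpace ℂ E] {T : ℝ} {f : ℝ → E}

/-- The Laplace transform of `f` cut off to the interval between `0` and `T`; unlike the full
transform it is defined on all of `ℂ` for locally integrable `f`. -/
noncomputable def truncLaplace (T : ℝ) (f : ℝ → E) (z : ℂ) : E :=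
  ∫ t in (0:ℝ)..T, Complex.exp (-(z * t)) • f t

lemma intervalIntegrable_exp_neg_mul_smul (hf : IntervalIntegrable f volume 0 T) (z : ℂ) :
    IntervalIntegrable (fun t : ℝ => Complex.exp (-(z * t)) • f t) volume 0 T :=
  hf.continuousOn_smul (Continuous.continuousOn (by fun_prop))

lemma norm_exp_neg_mul_ofReal_le {r R : ℝ} {z : ℂ} (hz : ‖z‖ ≤ r) {t : ℝ} (ht : |t| ≤ R) :
    ‖Complex.exp (-(z * t))‖ ≤ Real.exp (r * R) := by
  refine (Complex.norm_exp_le_exp_norm _).trans (Real.exp_le_exp.2 ?_)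
  rw [norm_neg, norm_mul, Complex.norm_real, Real.norm_eq_abs]
  exact mul_le_mul hz ht (abs_nonneg t) ((norm_nonneg z).trans hz)

lemma abs_le_abs_of_mem_uIoc_zero {t : ℝ} (ht : t ∈ uIoc 0 T) : |t| ≤ |T| := by
  simpa using abs_sub_left_of_mem_uIcc (uIoc_subset_uIcc ht)

lemma differentiable_truncLaplace (hf : IntervalIntegrable f volume 0 T) :
    Differentiable ℂ (truncLaplace T f) := by
  intro z₀
  have hderiv (z : ℂ) (t : ℝ) : HasDerivAt (fun z : ℂ => Complex.exp (-(z * t)) • f t)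
      ((Complex.exp (-(z * t)) * -t) • f t) z := by
    have hlin : HasDerivAt (fun z : ℂ => -(z * t)) (-t) z := (hasDerivAt_mul_const (t : ℂ)).neg
    exact hlin.cexp.smul_const (f t)
  have hbound (t : ℝ) (ht : t ∈ uIoc 0 T) (z : ℂ) (hz : z ∈ Metric.ball z₀ 1) :
      ‖(Complex.exp (-(z * t)) * -t) • f t‖ ≤
        Real.exp ((‖z₀‖ + 1) * |T|) * |T| * ‖f t‖ := by
    have htT := abs_le_abs_of_mem_uIoc_zero ht
    have hexp := norm_exp_neg_mul_ofReal_le (norm_lt_of_mem_ball hz).le htT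
    rw [norm_smul, norm_mul, norm_neg, Complex.norm_real, Real.norm_eq_abs]
    gcongr
  have hderiv_meas : AEStronglyMeasurable
      (fun t : ℝ => (Complex.exp (-(z₀ * t)) * -t) • f t) (volume.restrict (uIoc 0 T)) :=
    (Continuous.aestronglyMeasurable (by fun_prop)).smul hf.def'.aestronglyMeasurable
  exact (intervalIntegral.hasDerivAt_integral_of_dominated_loc_of_deriv_le
    (Metric.ball_mem_nhds z₀ one_pos)
    (Eventually.of_forall fun z =>
      (intervalIntegrable_exp_neg_mul_smul hf z).def'.aestronglyMeasurable)
    (intervalIntegrable_exp_neg_mul_smul hf z₀) hderiv_meas (ae_of_all _ hbound)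
    (hf.norm.const_mul _) (ae_of_all _ fun t _ z _ => hderiv z t)).2.differentiableAt

lemma tendsto_truncLaplace_atTop (hT : 0 ≤ T) (hf : IntervalIntegrable f volume 0 T) :
    Tendsto (fun x : ℝ => truncLaplace T f x) atTop (𝓝 0) := by
  have hbound : ∀ᶠ x : ℝ in atTop, ∀ᵐ t : ℝ, t ∈ uIoc 0 T →
      ‖Complex.exp (-(x * t)) • f t‖ ≤ ‖f t‖ := by
    filter_upwards [eventually_ge_atTop 0] with x hx
    refine ae_of_all _ fun t ht => ?_
    rw [uIoc_of_le hT] at ht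
    rw [norm_smul, Complex.norm_exp]
    refine mul_le_of_le_one_left (norm_nonneg _) (Real.exp_le_one_iff.2 ?_)
    simpa using mul_nonneg hx ht.1.le
  have hlim (t : ℝ) (ht : t ∈ uIoc 0 T) :
      Tendsto (fun x : ℝ => Complex.exp (-(x * t)) • f t) atTop (𝓝 0) := by
    rw [uIoc_of_le hT] at ht
    have hexp : Tendsto (fun x : ℝ => Complex.exp (-(x * t))) atTop (𝓝 0) := by
      rw [Complex.tendsto_exp_nhds_zero_iff]
      simpa using tendsto_id.atTop_mul_const ht.1
    simpa using hexp.smul_const (f t)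
  simpa using! intervalIntegral.tendsto_integral_filter_of_dominated_convergence (fun t => ‖f t‖)
    (Eventually.of_forall fun x : ℝ =>
      (intervalIntegrable_exp_neg_mul_smul hf x).def'.aestronglyMeasurable)
    hbound hf.norm (ae_of_all _ hlim)

lemma eq_zero_of_truncLaplace_eventuallyEq_const [CompleteSpace E] (hT : 0 ≤ T)
    (hf : IntervalIntegrable f volume 0 T) {x₀ : ℝ} {c : E}
    (h : (fun x : ℝ => truncLaplace T f x) =ᶠ[𝓝 x₀] fun _ => c) : c = 0 := by
  have hana : AnalyticOnNhd ℝ (fun x : ℝ => truncLaplace T f x) univ := fun x _ =>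
    ((differentiable_truncLaplace hf).analyticAt (x : ℂ)).restrictScalars.comp
      (Complex.ofRealCLM.analyticAt x)
  have hconst : (fun x : ℝ => truncLaplace T f x) = fun _ => c :=
    hana.eq_of_eventuallyEq analyticOnNhd_const h
  have hlim := tendsto_truncLaplace_atTop hT hf
  rw [hconst] at hlim
  exact tendsto_const_nhds_iff.1 hlim

end TruncLaplace

lemma phi_succ_eq_exp_mul_truncLaplace (k : ℕ) (z : ℂ) :
    phi (k + 1) z = Complex.exp z * truncLaplace 1 (fun t : ℝ => (t : ℂ) ^ k) z := by
  rw [phi, truncLaplace, ← intervalIntegral.integral_const_mul]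
  congr 1 with t
  rw [smul_eq_mul, ← mul_assoc, ← Complex.exp_add]
  ring_nf

lemma sum_phi_succ_eq_exp_mul_truncLaplace {n : ℕ} (c : Fin n → ℂ) (z : ℂ) :
    ∑ k : Fin n, phi ((k : ℕ) + 1) z * c k =
      Complex.exp z * truncLaplace 1 (fun t : ℝ => ∑ k : Fin n, (t : ℂ) ^ (k : ℕ) * c k) z := by
  simp only [phi_succ_eq_exp_mul_truncLaplace, mul_assoc, ← Finset.mul_sum]
  congr 1
  simp only [truncLaplace, smul_eq_mul, Finset.mul_sum, ← mul_assoc]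
  rw [intervalIntegral.integral_finsetSum
    fun k _ => Continuous.intervalIntegrable (by fun_prop) _ _]
  simp only [intervalIntegral.integral_mul_const]

theorem stmt_10_general {U : Set ℝ} (hU : IsOpen U) (hU_nonempty : U.Nonempty) {n : ℕ}
    (c : Fin n → ℂ) :
    ∃ z ∈ U, phi 0 (z : ℂ) - ∑ k : Fin n, phi ((k : ℕ) + 1) (z : ℂ) * c k ≠ 0 := by
  obtain ⟨x₀, hx₀⟩ := hU_nonempty
  by_contra! hvanish
  set p : ℝ → ℂ := fun t => ∑ k : Fin n, (t : ℂ) ^ (k : ℕ) * c k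
  have hp : IntervalIntegrable p volume 0 1 := Continuous.intervalIntegrable (by fun_prop) _ _
  have hone : (fun x : ℝ => truncLaplace 1 p x) =ᶠ[𝓝 x₀] fun _ => 1 := by
    filter_upwards [hU.mem_nhds hx₀] with x hx
    have hexp : Complex.exp x = Complex.exp x * truncLaplace 1 p x := by
      rw [← sum_phi_succ_eq_exp_mul_truncLaplace]
      exact sub_eq_zero.1 (hvanish x hx)
    exact (left_eq_mul₀ (Complex.exp_ne_zero _)).1 hexp
  exact one_ne_zero (eq_zero_of_truncLaplace_eventuallyEq_const zero_le_one hp hone)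

/-- The slow stiff limit z ↦ φ₀(z) − μ(z)ᵀ A⁻¹𝟙 of the stability function of a
step predictor-corrector MRI-GARK method does not vanish identically on (−∞, 0). -/
theorem stmt_10 (s K : ℕ) (hs : 1 ≤ s) (A : Matrix (Fin s) (Fin s) ℝ)
    (hA : IsUnit A.det) (γ : Fin (K + 1) → Fin s → ℝ) :
    ∃ z : ℝ, z < 0 ∧
      phi 0 (z : ℂ) - ∑ j,
        (∑ k : Fin (K + 1), phi ((k : ℕ) + 1) (z : ℂ) * ((γ k j : ℝ) : ℂ)) *
          (((A⁻¹.mulVec (fun _ => 1)) j : ℝ) : ℂ) ≠ 0 := by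
  simp only [Finset.sum_mul, mul_assoc, Finset.sum_comm (γ := Fin s), ← Finset.mul_sum]
  exact stmt_10_general isOpen_Iio nonempty_Iio _
end

section
/- Let D ∈ ℝ^{s×s} be an invertible diagonal matrix, T ∈ ℝ^{s×s}, let δc ∈ ℝ^s with δc_i > 0 for all i, and let Γ^0, …, Γ^K, Ψ^0, …, Ψ^K ∈ ℝ^{s×s}. Then μ(z) = ν(z) D^{−1} T holds for all real z < 0 if and only if Γ^k = Ψ^k D^{−1} T for every 0 ≤ k ≤ K. (This is the stability simplifying assumption for internal stage predictor-corrector MRI-GARK methods, which guarantees boundedness of the stability function in the slow stiff limit.) -/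
/-!
Integration by parts gives `z ^ (k + 1) * φ_{k+1}(z) = k! * exp z - Q_k(z)` with `Q_k` a polynomial.
Multiplying a relation `∑ k < n, a_k φ_{k+1} = 0` by `z ^ n` therefore yields
`exp z * P(z) = Q(z)` with polynomials `P = ∑ k < n, a_k k! z ^ (n - 1 - k)` and `Q`. If this holds
on a set with an accumulation point, it holds on all of `ℂ` by the identity theorem, and the
periodicity of `exp` then forces `P = 0`. So the `φ_{k+1}` are linearly independent on such a set,
and the matrix identity can be compared entry by entry and coefficient by coefficient.
-/

open Polynomial Topology Filter

section ExpPolynomial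

variable {P Q : ℂ[X]}

lemma C_exp_mul_eq_of_forall_exp_mul_eval_eq (h : ∀ z, Complex.exp z * P.eval z = Q.eval z)
    (c : ℂ) : C (Complex.exp c) * P = Q := by
  have translates_injective :
      Function.Injective fun n : ℤ => c + n * (2 * Real.pi * Complex.I) := fun m n hmn => by
    simpa [Complex.two_pi_I_ne_zero] using hmn
  refine eq_of_infinite_eval_eq _ _
    ((Set.infinite_range_of_injective translates_injective).mono ?_)
  rintro _ ⟨n, rfl⟩
  simpa [Complex.exp_add, Complex.exp_int_mul_two_pi_mul_I] using
    h (c + n * (2 * Real.pi * Complex.I))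

lemma eq_zero_of_forall_exp_mul_eval_eq (h : ∀ z, Complex.exp z * P.eval z = Q.eval z) :
    P = 0 := by
  have at_zero : P = Q := by simpa using C_exp_mul_eq_of_forall_exp_mul_eval_eq h 0
  have at_pi_I : -P = Q := by
    simpa [Complex.exp_pi_mul_I] using
      C_exp_mul_eq_of_forall_exp_mul_eval_eq h (Real.pi * Complex.I)
  exact self_eq_neg.mp (at_zero.trans at_pi_I.symm)

lemma eq_zero_of_forall_mem_exp_mul_eval_eq {S : Set ℂ} {z₀ : ℂ} (hS : AccPt z₀ (𝓟 S))
    (h : ∀ z ∈ S, Complex.exp z * P.eval z = Q.eval z) : P = 0 := by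
  have exp_mul_analytic : AnalyticOnNhd ℂ (fun z => Complex.exp z * P.eval z) Set.univ :=
    analyticOnNhd_cexp.mul (AnalyticOnNhd.eval_polynomial P)
  have eq_everywhere := exp_mul_analytic.eq_of_frequently_eq (AnalyticOnNhd.eval_polynomial Q)
    ((accPt_iff_frequently_nhdsNE.mp hS).mono h)
  exact eq_zero_of_forall_exp_mul_eval_eq (congrFun eq_everywhere)

end ExpPolynomial

section Phi

lemma phi_succ (k : ℕ) (z : ℂ) :
    phi (k + 1) z = ∫ t in (0 : ℝ)..1, Complex.exp (z * (1 - t)) * (t : ℂ) ^ k := rfl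

lemma hasDerivAt_exp_mul_one_sub (z : ℂ) (t : ℝ) :
    HasDerivAt (fun t : ℝ => Complex.exp (z * (1 - t))) (-z * Complex.exp (z * (1 - t))) t := by
  have exponent : HasDerivAt (fun t : ℝ => z * (1 - (t : ℂ))) (z * -1) t :=
    ((hasDerivAt_id t).ofReal_comp.const_sub 1).const_mul z
  exact exponent.cexp.congr_deriv (by ring)

lemma mul_phi_one (z : ℂ) : z * phi 1 z = Complex.exp z - 1 := by
  have ftc := intervalIntegral.integral_eq_sub_of_hasDerivAt (a := 0) (b := 1)
    (fun t _ => hasDerivAt_exp_mul_one_sub z t)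
    (Continuous.intervalIntegrable (by fun_prop) _ _)
  rw [intervalIntegral.integral_const_mul] at ftc
  simp only [Complex.ofReal_one, Complex.ofReal_zero, sub_self, sub_zero, mul_zero, mul_one,
    Complex.exp_zero] at ftc
  simp only [phi_succ, pow_zero, mul_one]
  linear_combination -ftc

lemma mul_phi_succ_succ (k : ℕ) (z : ℂ) :
    z * phi (k + 2) z = (k + 1) * phi (k + 1) z - 1 := by
  have pow_deriv (t : ℝ) :
      HasDerivAt (fun t : ℝ => (t : ℂ) ^ (k + 1)) ((k + 1) * (t : ℂ) ^ k) t := by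
    simpa using (hasDerivAt_pow (k + 1) (t : ℂ)).comp_ofReal
  have by_parts := intervalIntegral.integral_mul_deriv_eq_deriv_mul (a := 0) (b := 1)
    (fun t _ => hasDerivAt_exp_mul_one_sub z t) (fun t _ => pow_deriv t)
    (Continuous.intervalIntegrable (by fun_prop) _ _)
    (Continuous.intervalIntegrable (by fun_prop) _ _)
  simp only [mul_left_comm _ ((k : ℂ) + 1), mul_assoc (-z), intervalIntegral.integral_const_mul,
    ← phi_succ] at by_parts
  simp only [Complex.ofReal_one, Complex.ofReal_zero, sub_self, mul_zero, one_pow,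
    Complex.exp_zero, mul_one, zero_pow k.succ_ne_zero, sub_zero] at by_parts
  linear_combination -by_parts

/-- The polynomial `Q_k = ∑ j ≤ k, (k! / j!) X ^ j`, which is `k!` times the Taylor polynomial of
`exp` of degree `k`; it is the difference of `k! * exp z` and `z ^ (k + 1) * φ_{k+1}(z)`. The
recursion mirrors that of the φ-functions. -/
noncomputable def phiPolynomial : ℕ → ℂ[X]
  | 0 => 1
  | k + 1 => C (k + 1 : ℂ) * phiPolynomial k + X ^ (k + 1)

lemma pow_mul_phi (k : ℕ) (z : ℂ) :
    z ^ (k + 1) * phi (k + 1) z = k.factorial * Complex.exp z - (phiPolynomial k).eval z := by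
  induction k with
  | zero => simpa [phiPolynomial] using mul_phi_one z
  | succ k ih =>
    rw [pow_succ, mul_assoc, mul_phi_succ_succ, phiPolynomial, Nat.factorial_succ]
    simp only [eval_add, eval_mul, eval_C, eval_pow, eval_X]
    push_cast
    linear_combination ((k : ℂ) + 1) * ih

lemma pow_mul_sum_phi {n : ℕ} (a : Fin n → ℂ) (z : ℂ) :
    z ^ n * ∑ k : Fin n, phi (k + 1) z * a k =
      Complex.exp z *
          (∑ k : Fin n, C (a k * (k : ℕ).factorial) * X ^ (n - 1 - k : ℕ)).eval z -
        (∑ k : Fin n, C (a k) * X ^ (n - 1 - k : ℕ) * phiPolynomial k).eval z := by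
  simp only [eval_finsetSum, Finset.mul_sum, ← Finset.sum_sub_distrib]
  refine Finset.sum_congr rfl fun k _ => ?_
  have pow_split : z ^ n = z ^ (n - 1 - k : ℕ) * z ^ (k + 1 : ℕ) := by
    rw [← pow_add]
    congr 1
    omega
  simp only [pow_split, eval_mul, eval_C, eval_pow, eval_X]
  linear_combination a k * z ^ (n - 1 - k : ℕ) * pow_mul_phi k z

lemma coeff_sum_C_mul_X_pow_rev {R : Type*} [Semiring R] {n : ℕ} (b : Fin n → R) (k : Fin n) :
    (∑ j : Fin n, C (b j) * X ^ (n - 1 - j : ℕ)).coeff (n - 1 - k : ℕ) = b k := by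
  simp only [finsetSum_coeff, coeff_C_mul_X_pow]
  rw [Finset.sum_eq_single k (fun j _ hjk => if_neg (by omega)) (by simp), if_pos rfl]

theorem eq_zero_of_forall_mem_sum_phi_mul_eq_zero {n : ℕ} {a : Fin n → ℂ} {S : Set ℂ} {z₀ : ℂ}
    (hS : AccPt z₀ (𝓟 S)) (h : ∀ z ∈ S, ∑ k : Fin n, phi (k + 1) z * a k = 0) : a = 0 := by
  have exp_coefficient_eq_zero :
      ∑ k : Fin n, C (a k * (k : ℕ).factorial) * X ^ (n - 1 - k : ℕ) = 0 :=
    eq_zero_of_forall_mem_exp_mul_eval_eq hS fun z hz => by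
      rw [← sub_eq_zero, ← pow_mul_sum_phi, h z hz, mul_zero]
  funext k
  have coeff_eq_zero : a k * (k : ℕ).factorial = 0 := by
    rw [← coeff_sum_C_mul_X_pow_rev (fun j => a j * (j : ℕ).factorial) k,
      exp_coefficient_eq_zero, coeff_zero]
  simpa [Nat.factorial_ne_zero] using coeff_eq_zero

end Phi

section PhiMatrix

variable {l m n : Type*} [Fintype m] [DecidableEq m] {K : ℕ}

/-- The matrix function `∑ k, diag(φ_{k+1}(δc z)) A^k`, which is `μ(z)` for `A = Γ` and `ν(z)` for
`A = Ψ`. The coefficients `A^k` are complex and need not be square. -/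
noncomputable def phiMatrix (δc : m → ℂ) (A : Fin K → Matrix m n ℂ) (z : ℂ) : Matrix m n ℂ :=
  ∑ k : Fin K, Matrix.diagonal (fun i => phi (k + 1) (δc i * z)) * A k

lemma phiMatrix_apply (δc : m → ℂ) (A : Fin K → Matrix m n ℂ) (z : ℂ) (i : m) (j : n) :
    phiMatrix δc A z i j = ∑ k : Fin K, phi (k + 1) (δc i * z) * A k i j := by
  simp only [phiMatrix, Matrix.sum_apply, Matrix.diagonal_mul]

lemma phiMatrix_mul [Fintype l] (δc : m → ℂ) (A : Fin K → Matrix m l ℂ) (M : Matrix l n ℂ) (z : ℂ) :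
    phiMatrix δc A z * M = phiMatrix δc (fun k => A k * M) z := by
  simp only [phiMatrix, Matrix.sum_mul, Matrix.mul_assoc]

theorem forall_mem_phiMatrix_eq_iff {δc : m → ℂ} (hδc : ∀ i, δc i ≠ 0) {S : Set ℂ} {z₀ : ℂ}
    (hS : AccPt z₀ (𝓟 S)) {A B : Fin K → Matrix m n ℂ} :
    (∀ z ∈ S, phiMatrix δc A z = phiMatrix δc B z) ↔ A = B := by
  refine ⟨fun h => ?_, fun h z _ => h ▸ rfl⟩
  ext k i j
  have scaled_accPt : AccPt (δc i * z₀) (𝓟 ((δc i * ·) '' S)) := by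
    simpa only [map_principal] using
      hS.map (continuous_const_mul (δc i)).continuousAt (mul_right_injective₀ (hδc i))
  have entry_relation : ∀ w ∈ (δc i * ·) '' S,
      ∑ k : Fin K, phi (k + 1) w * (A k i j - B k i j) = 0 := by
    rintro _ ⟨z, hz, rfl⟩
    simp only [mul_sub, Finset.sum_sub_distrib, ← phiMatrix_apply, h z hz, sub_self]
  exact sub_eq_zero.mp
    (congrFun (eq_zero_of_forall_mem_sum_phi_mul_eq_zero scaled_accPt entry_relation) k)

theorem stmt_15_general [Fintype l] {δc : m → ℂ} (hδc : ∀ i, δc i ≠ 0) {S : Set ℂ} {z₀ : ℂ}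
    (hS : AccPt z₀ (𝓟 S)) (Γ : Fin K → Matrix m n ℂ) (Ψ : Fin K → Matrix m l ℂ)
    (M : Matrix l n ℂ) :
    (∀ z ∈ S, phiMatrix δc Γ z = phiMatrix δc Ψ z * M) ↔ ∀ k, Γ k = Ψ k * M := by
  simp only [phiMatrix_mul, forall_mem_phiMatrix_eq_iff hδc hS, funext_iff]

end PhiMatrix

lemma accPt_zero_ofReal_image_Iio : AccPt (0 : ℂ) (𝓟 (Complex.ofReal '' Set.Iio 0)) := by
  have accPt_real : AccPt (0 : ℝ) (𝓟 (Set.Iio 0)) :=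
    accPt_principal_iff_nhdsWithin.mpr (by simpa using nhdsLT_neBot (0 : ℝ))
  simpa using accPt_real.map Complex.continuous_ofReal.continuousAt Complex.ofReal_injective

lemma map_eq_map_mul_map_iff {R S l m n : Type*} [NonAssocSemiring R] [NonAssocSemiring S]
    [Fintype l] {f : R →+* S} (hf : Function.Injective f) {A : Matrix m n R} {B : Matrix m l R}
    {M : Matrix l n R} : A.map f = B.map f * M.map f ↔ A = B * M := by
  rw [← Matrix.map_mul, (Matrix.map_injective hf).eq_iff]

/-- The stability simplifying assumption for internal stage predictor-corrector
MRI-GARK methods: μ(z) = ν(z) D⁻¹ T for all z < 0 iff Γ^k = Ψ^k D⁻¹ T for all k. -/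
theorem stmt_15 (s K : ℕ) (D T : Matrix (Fin s) (Fin s) ℝ)
    (hDdiag : D.IsDiag) (hDinv : IsUnit D.det)
    (δc : Fin s → ℝ) (hδc : ∀ i, 0 < δc i)
    (Γ Ψ : Fin (K + 1) → Matrix (Fin s) (Fin s) ℝ) :
    (∀ z : ℝ, z < 0 →
      (∑ k : Fin (K + 1),
        Matrix.diagonal (fun i => phi ((k : ℕ) + 1) ((δc i * z : ℝ) : ℂ)) *
          (Γ k).map Complex.ofReal)
      = (∑ k : Fin (K + 1),
          Matrix.diagonal (fun i => phi ((k : ℕ) + 1) ((δc i * z : ℝ) : ℂ)) *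
            (Ψ k).map Complex.ofReal) * (D⁻¹ * T).map Complex.ofReal)
    ↔ ∀ k : Fin (K + 1), Γ k = Ψ k * (D⁻¹ * T) := by
  simpa only [phiMatrix, Set.forall_mem_image, Set.mem_Iio, Complex.ofReal_mul,
    map_eq_map_mul_map_iff Complex.ofRealHom.injective] using!
    stmt_15_general (fun i => Complex.ofReal_ne_zero.mpr (hδc i).ne') accPt_zero_ofReal_image_Iio
      (fun k => (Γ k).map Complex.ofRealHom) (fun k => (Ψ k).map Complex.ofRealHom)
      ((D⁻¹ * T).map Complex.ofRealHom)
end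

section
/- Let s, m ≥ 1 and K ≥ 0 be integers, let A^S ∈ ℝ^{s×s}, c^S, δc ∈ ℝ^s, Ψ^0, …, Ψ^K, Γ^0, …, Γ^K ∈ ℝ^{s×s}, and let L ∈ ℝ^{s×s} be the lower shift matrix. Let b ∈ ℝ^m, A ∈ ℝ^{m×m}, c ∈ ℝ^m satisfy bᵀ𝟙_m = 1 and bᵀ A c^{×k} = ζ_k for all 0 ≤ k ≤ K, where ζ_k = 1/((k+1)(k+2)). Then (δc ⊗ b)ᵀ ( (L A^S c^S) ⊗ 𝟙_m + Σ_{k=0}^K ((Ψ^k + Γ^k) c^S) ⊗ (A c^{×k}) ) = δcᵀ ( L A^S + Σ_{k=0}^K ζ_k (Ψ^k + Γ^k) ) c^S. (This identity establishes the third order coupling condition bᶠᵀ Aᶠˢ cˢ = 1/6 of internal stage predictor-corrector MRI-GARK methods.) -/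
open Matrix

/-!
The pairing of Kronecker products factors, `(x ⊗ y)ᵀ (u ⊗ v) = (xᵀ u) (yᵀ v)`. Pairing with `δc ⊗ b`
therefore collapses every fast vector to its moment against `b`: the all-ones vector to `1` and
`A c^{×k}` to `ζ_k`. Linearity then reassembles the slow factors into a single matrix.
-/

section KroneckerVec

variable {R ι κ : Type*}

/-- The Kronecker product `u ⊗ v` of two vectors, indexed by pairs `(i, j)` instead of the flattened
index, so that it needs no ordering of the index types. -/
def kroneckerVec [Mul R] (u : ι → R) (v : κ → R) : ι × κ → R :=
  fun p => u p.1 * v p.2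

theorem kroneckerVec_dotProduct_kroneckerVec [CommSemiring R] [Fintype ι] [Fintype κ]
    (x u : ι → R) (y v : κ → R) :
    kroneckerVec x y ⬝ᵥ kroneckerVec u v = (x ⬝ᵥ u) * (y ⬝ᵥ v) := by
  simp only [dotProduct, kroneckerVec, Fintype.sum_mul_sum, Fintype.sum_prod_type,
    mul_mul_mul_comm]

theorem kroneckerVec_dotProduct_sum_kroneckerVec [CommSemiring R] [Fintype ι] [Fintype κ]
    {σ : Type*} (t : Finset σ) (x : ι → R) (y : κ → R) (u : σ → ι → R) (v : σ → κ → R) :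
    kroneckerVec x y ⬝ᵥ ∑ k ∈ t, kroneckerVec (u k) (v k) =
      x ⬝ᵥ ∑ k ∈ t, (y ⬝ᵥ v k) • u k := by
  simp only [dotProduct_sum, kroneckerVec_dotProduct_kroneckerVec, dotProduct_smul, smul_eq_mul,
    mul_comm]

end KroneckerVec

/-- Here `B` stands for `L A^S`, `M k` for `Ψ^k + Γ^k`, and `v k` for `A c^{×k}`. -/
theorem stmt_16_general {R ι κ μ σ : Type*} [CommSemiring R] [Fintype ι] [Fintype κ] [Fintype μ]
    (t : Finset σ) (B : Matrix ι μ R) (M : σ → Matrix ι μ R) (cS : μ → R) (δc : ι → R)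
    (b : κ → R) (v : σ → κ → R) (ζ : σ → R) (hb1 : b ⬝ᵥ 1 = 1)
    (hbv : ∀ k ∈ t, b ⬝ᵥ v k = ζ k) :
    kroneckerVec δc b ⬝ᵥ
        (kroneckerVec (B *ᵥ cS) 1 + ∑ k ∈ t, kroneckerVec (M k *ᵥ cS) (v k)) =
      δc ⬝ᵥ ((B + ∑ k ∈ t, ζ k • M k) *ᵥ cS) := by
  have constant_term : kroneckerVec δc b ⬝ᵥ kroneckerVec (B *ᵥ cS) 1 = δc ⬝ᵥ (B *ᵥ cS) := by
    rw [kroneckerVec_dotProduct_kroneckerVec, hb1, mul_one]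
  have moment_terms : kroneckerVec δc b ⬝ᵥ ∑ k ∈ t, kroneckerVec (M k *ᵥ cS) (v k) =
      δc ⬝ᵥ ((∑ k ∈ t, ζ k • M k) *ᵥ cS) := by
    rw [kroneckerVec_dotProduct_sum_kroneckerVec, sum_mulVec]
    congr 1
    exact Finset.sum_congr rfl fun k hk => by rw [hbv k hk, smul_mulVec]
  rw [dotProduct_add, constant_term, moment_terms, add_mulVec, dotProduct_add]

/-- Identity establishing the third order coupling condition bᶠᵀ Aᶠˢ cˢ = 1/6 of
internal stage predictor-corrector MRI-GARK methods. -/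
theorem stmt_16 (s m K : ℕ) (hs : 1 ≤ s) (hm : 1 ≤ m)
    (AS : Matrix (Fin s) (Fin s) ℝ) (cS δc : Fin s → ℝ)
    (Ψ Γ : Fin (K + 1) → Matrix (Fin s) (Fin s) ℝ)
    (L : Matrix (Fin s) (Fin s) ℝ)
    (hL : ∀ i j : Fin s, L i j = if (i : ℕ) = (j : ℕ) + 1 then 1 else 0)
    (b : Fin m → ℝ) (A : Matrix (Fin m) (Fin m) ℝ) (c : Fin m → ℝ)
    (hb1 : b ⬝ᵥ (fun _ => (1 : ℝ)) = 1)
    (hbA : ∀ k : Fin (K + 1), b ⬝ᵥ A.mulVec (fun i => c i ^ (k : ℕ)) =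
      1 / ((((k : ℕ) : ℝ) + 1) * (((k : ℕ) : ℝ) + 2))) :
    (fun p : Fin s × Fin m => δc p.1 * b p.2) ⬝ᵥ
      (fun p : Fin s × Fin m =>
        (L.mulVec (AS.mulVec cS)) p.1 * 1
        + ∑ k : Fin (K + 1), ((Ψ k + Γ k).mulVec cS) p.1 *
            (A.mulVec (fun i => c i ^ (k : ℕ))) p.2)
    = δc ⬝ᵥ ((L * AS + ∑ k : Fin (K + 1),
        (1 / ((((k : ℕ) : ℝ) + 1) * (((k : ℕ) : ℝ) + 2))) • (Ψ k + Γ k)).mulVec cS) := by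
  simpa only [dotProduct, kroneckerVec, ← mulVec_mulVec, Pi.add_apply, Pi.one_apply,
    Finset.sum_apply] using
    stmt_16_general Finset.univ (L * AS) (fun k => Ψ k + Γ k) cS δc b
      (fun k => A *ᵥ fun i => c i ^ (k : ℕ)) _ hb1 fun k _ => hbA k
end

section
/- Let s, m ≥ 1 and K ≥ 0 be integers, let A^S ∈ ℝ^{s×s}, c^S, δc ∈ ℝ^s, Ψ^0, …, Ψ^K, Γ^0, …, Γ^K ∈ ℝ^{s×s}, let L ∈ ℝ^{s×s} be the lower shift matrix, and let δC ∈ ℝ^{s×s} be the lower triangular matrix with (δC)_{i,j} = δc_j for j ≤ i and 0 otherwise. Let b ∈ ℝ^m, A ∈ ℝ^{m×m}, c ∈ ℝ^m satisfy bᵀ𝟙_m = 1, A𝟙_m = c, bᵀc = 1/2, bᵀ A c^{×k} = ζ_k = 1/((k+1)(k+2)) and bᵀ A A c^{×k} = ξ_k = 1/((k+1)(k+2)(k+3)) for all 0 ≤ k ≤ K. Then (δc ⊗ b)ᵀ ( (L δC) ⊗ (𝟙_m bᵀ) + diag(δc) ⊗ A ) ( (L A^S c^S) ⊗ 𝟙_m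 + Σ_{k=0}^K ((Ψ^k + Γ^k) c^S) ⊗ (A c^{×k}) ) = δcᵀ L δC ( L A^S + Σ_{k=0}^K ζ_k (Ψ^k + Γ^k) ) c^S + (δc^{×2})ᵀ ( (1/2) L A^S + Σ_{k=0}^K ξ_k (Ψ^k + Γ^k) ) c^S. (This identity establishes the fourth order coupling condition bᶠᵀ Aᶠᶠ Aᶠˢ cˢ = 1/24 of internal stage predictor-corrector MRI-GARK methods.) -/
open Matrix Kronecker

/-!
By bilinearity it suffices to treat a single tensor `x ⊗ y` in the last factor. There each Kronecker
block separates into a slow and a fast scalar: `(𝟙 bᵀ)` contributes `(bᵀ 𝟙) (bᵀ y) = bᵀ y`, and the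
diagonal block contributes `bᵀ A y` while squaring the weights `δc`. For `y = 𝟙` and `y = A c^{×k}`
these fast scalars are exactly the ones prescribed by the order conditions.
-/

section NonUnitalSemiring

variable {R m n : Type*} [NonUnitalSemiring R] [Fintype m]

theorem dotProduct_vecMulVec_mulVec [Fintype n] (u v : m → R) (w y : n → R) :
    u ⬝ᵥ vecMulVec v w *ᵥ y = (u ⬝ᵥ v) * (w ⬝ᵥ y) := by
  simp only [vecMulVec_mulVec, dotProduct, Pi.smul_apply, op_smul_eq_mul, Finset.sum_mul, mul_assoc]

theorem dotProduct_diagonal_mulVec [DecidableEq m] (u d x : m → R) :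
    u ⬝ᵥ diagonal d *ᵥ x = (u * d) ⬝ᵥ x := by
  simp only [dotProduct, mulVec_diagonal, Pi.mul_apply, mul_assoc]

end NonUnitalSemiring

section CommSemiring

variable {R l m n p : Type*} [CommSemiring R]

/-- The Kronecker product `x ⊗ y` of two vectors, indexed by pairs so that it is compatible with
`Matrix.kronecker`. -/
def vecKronecker (x : m → R) (y : n → R) : m × n → R :=
  fun i => x i.1 * y i.2

variable [Fintype m] [Fintype n]

theorem vecKronecker_dotProduct_vecKronecker (u x : m → R) (v y : n → R) :
    vecKronecker u v ⬝ᵥ vecKronecker x y = (u ⬝ᵥ x) * (v ⬝ᵥ y) := by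
  simp only [vecKronecker, dotProduct, Fintype.sum_prod_type, Finset.sum_mul_sum,
    mul_mul_mul_comm]

theorem kronecker_mulVec_vecKronecker (B : Matrix l m R) (C : Matrix p n R)
    (x : m → R) (y : n → R) :
    (B ⊗ₖ C) *ᵥ vecKronecker x y = vecKronecker (B *ᵥ x) (C *ᵥ y) :=
  funext fun i => vecKronecker_dotProduct_vecKronecker (B i.1) x (C i.2) y

theorem vecKronecker_dotProduct_kronecker_mulVec [Fintype l] [Fintype p] (u : l → R) (v : p → R)
    (B : Matrix l m R) (C : Matrix p n R) (x : m → R) (y : n → R) :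
    vecKronecker u v ⬝ᵥ (B ⊗ₖ C) *ᵥ vecKronecker x y = (u ⬝ᵥ B *ᵥ x) * (v ⬝ᵥ C *ᵥ y) := by
  rw [kronecker_mulVec_vecKronecker, vecKronecker_dotProduct_vecKronecker]

theorem vecKronecker_dotProduct_add_diagonal_kronecker_mulVec [DecidableEq m] (M : Matrix m m R)
    (A : Matrix n n R) (δ x : m → R) {b : n → R} (hb : b ⬝ᵥ 1 = 1) (y : n → R) :
    vecKronecker δ b ⬝ᵥ (M ⊗ₖ vecMulVec 1 b + diagonal δ ⊗ₖ A) *ᵥ vecKronecker x y =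
      (b ⬝ᵥ y) * (δ ⬝ᵥ M *ᵥ x) + (b ⬝ᵥ A *ᵥ y) * ((δ ^ 2) ⬝ᵥ x) := by
  rw [add_mulVec, dotProduct_add, vecKronecker_dotProduct_kronecker_mulVec,
    vecKronecker_dotProduct_kronecker_mulVec, dotProduct_vecMulVec_mulVec,
    dotProduct_diagonal_mulVec, hb, one_mul, sq, mul_comm (b ⬝ᵥ y), mul_comm (b ⬝ᵥ A *ᵥ y)]

theorem stmt_17_general {κ : Type*} [Fintype κ] [DecidableEq m] (M N : Matrix m m R)
    (W : κ → Matrix m m R) (δ x : m → R) (A : Matrix n n R) (b : n → R) (y : κ → n → R)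
    {α : R} {ζ ξ : κ → R} (hb : b ⬝ᵥ 1 = 1) (hα : b ⬝ᵥ A *ᵥ 1 = α)
    (hζ : ∀ k, b ⬝ᵥ y k = ζ k) (hξ : ∀ k, b ⬝ᵥ A *ᵥ y k = ξ k) :
    vecKronecker δ b ⬝ᵥ (M ⊗ₖ vecMulVec 1 b + diagonal δ ⊗ₖ A) *ᵥ
        (vecKronecker (N *ᵥ x) 1 + ∑ k, vecKronecker (W k *ᵥ x) (y k)) =
      δ ⬝ᵥ (M * (N + ∑ k, ζ k • W k)) *ᵥ x + (δ ^ 2) ⬝ᵥ (α • N + ∑ k, ξ k • W k) *ᵥ x := by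
  have expand_left : vecKronecker δ b ⬝ᵥ (M ⊗ₖ vecMulVec 1 b + diagonal δ ⊗ₖ A) *ᵥ
        (vecKronecker (N *ᵥ x) 1 + ∑ k, vecKronecker (W k *ᵥ x) (y k)) =
      (δ ⬝ᵥ M *ᵥ N *ᵥ x + α * ((δ ^ 2) ⬝ᵥ N *ᵥ x)) +
        ∑ k, (ζ k * (δ ⬝ᵥ M *ᵥ W k *ᵥ x) + ξ k * ((δ ^ 2) ⬝ᵥ W k *ᵥ x)) := by
    simp only [mulVec_add, mulVec_sum, dotProduct_add, dotProduct_sum,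
      vecKronecker_dotProduct_add_diagonal_kronecker_mulVec M A δ _ hb, hb, hα, hζ, hξ, one_mul]
  have expand_slow : δ ⬝ᵥ (M * (N + ∑ k, ζ k • W k)) *ᵥ x =
      δ ⬝ᵥ M *ᵥ N *ᵥ x + ∑ k, ζ k * (δ ⬝ᵥ M *ᵥ W k *ᵥ x) := by
    simp only [← mulVec_mulVec, add_mulVec, sum_mulVec, smul_mulVec, mulVec_add, mulVec_sum,
      mulVec_smul, dotProduct_add, dotProduct_sum, dotProduct_smul, smul_eq_mul]
  have expand_squared : (δ ^ 2) ⬝ᵥ (α • N + ∑ k, ξ k • W k) *ᵥ x =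
      α * ((δ ^ 2) ⬝ᵥ N *ᵥ x) + ∑ k, ξ k * ((δ ^ 2) ⬝ᵥ W k *ᵥ x) := by
    simp only [add_mulVec, sum_mulVec, smul_mulVec, dotProduct_add, dotProduct_sum,
      dotProduct_smul, smul_eq_mul]
  rw [expand_left, expand_slow, expand_squared, Finset.sum_add_distrib, add_add_add_comm]

end CommSemiring

/-- Identity establishing the fourth order coupling condition
bᶠᵀ Aᶠᶠ Aᶠˢ cˢ = 1/24 of internal stage predictor-corrector MRI-GARK methods. -/
theorem stmt_17 (s m K : ℕ) (hs : 1 ≤ s) (hm : 1 ≤ m)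
    (AS : Matrix (Fin s) (Fin s) ℝ) (cS δc : Fin s → ℝ)
    (Ψ Γ : Fin (K + 1) → Matrix (Fin s) (Fin s) ℝ)
    (L : Matrix (Fin s) (Fin s) ℝ)
    (hL : ∀ i j : Fin s, L i j = if (i : ℕ) = (j : ℕ) + 1 then 1 else 0)
    (δC : Matrix (Fin s) (Fin s) ℝ)
    (hδC : ∀ i j : Fin s, δC i j = if j ≤ i then δc j else 0)
    (b : Fin m → ℝ) (A : Matrix (Fin m) (Fin m) ℝ) (c : Fin m → ℝ)
    (hb1 : b ⬝ᵥ (fun _ => (1 : ℝ)) = 1)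
    (hA1 : A.mulVec (fun _ => (1 : ℝ)) = c)
    (hbc : b ⬝ᵥ c = 1 / 2)
    (hbA : ∀ k : Fin (K + 1), b ⬝ᵥ A.mulVec (fun i => c i ^ (k : ℕ)) =
      1 / ((((k : ℕ) : ℝ) + 1) * (((k : ℕ) : ℝ) + 2)))
    (hbAA : ∀ k : Fin (K + 1), b ⬝ᵥ A.mulVec (A.mulVec (fun i => c i ^ (k : ℕ))) =
      1 / ((((k : ℕ) : ℝ) + 1) * (((k : ℕ) : ℝ) + 2) * (((k : ℕ) : ℝ) + 3))) :
    (fun p : Fin s × Fin m => δc p.1 * b p.2) ⬝ᵥ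
      (((L * δC) ⊗ₖ vecMulVec (fun _ => (1 : ℝ)) b + Matrix.diagonal δc ⊗ₖ A).mulVec
        (fun p : Fin s × Fin m =>
          (L.mulVec (AS.mulVec cS)) p.1 * 1
          + ∑ k : Fin (K + 1), ((Ψ k + Γ k).mulVec cS) p.1 *
              (A.mulVec (fun i => c i ^ (k : ℕ))) p.2))
    = δc ⬝ᵥ ((L * δC * (L * AS + ∑ k : Fin (K + 1),
          (1 / ((((k : ℕ) : ℝ) + 1) * (((k : ℕ) : ℝ) + 2))) • (Ψ k + Γ k))).mulVec cS)
      + (fun i => δc i ^ 2) ⬝ᵥ (((1 / 2 : ℝ) • (L * AS) + ∑ k : Fin (K + 1),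
          (1 / ((((k : ℕ) : ℝ) + 1) * (((k : ℕ) : ℝ) + 2) * (((k : ℕ) : ℝ) + 3))) •
            (Ψ k + Γ k)).mulVec cS) := by
  have key := stmt_17_general (L * δC) (L * AS) (fun k => Ψ k + Γ k) δc cS A b
    (fun k => A *ᵥ fun i => c i ^ (k : ℕ)) hb1 ((congrArg (b ⬝ᵥ ·) hA1).trans hbc) hbA hbAA
  rwa [← mulVec_mulVec, Finset.sum_fn] at key
end

section
/- Let s, m ≥ 1 and K ≥ 0 be integers, let A^S ∈ ℝ^{s×s} with diagonal part D and strictly lower triangular part T, let c^S, δc ∈ ℝ^s, let Ψ^0, …, Ψ^K, Γ^0, …, Γ^K ∈ ℝ^{s×s}, and let L ∈ ℝ^{s×s} be the lower shift matrix. Let b ∈ ℝ^m, A ∈ ℝ^{m×m}, c ∈ ℝ^m satisfy bᵀ𝟙_m = 1 and bᵀ A c^{×k} = ζ_k = 1/((k+1)(k+2)) for all 0 ≤ k ≤ K. Then (δc ⊗ b)ᵀ [ ( (L D) ⊗ 𝟙_m + Σ_{k=0}^K Ψ^k ⊗ (A c^{×k}) ) (A^S c^S) + (1/2) ( (L T)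 ⊗ 𝟙_m + Σ_{k=0}^K Γ^k ⊗ (A c^{×k}) ) c^{S×2} ] = δcᵀ ( L D + Σ_{k=0}^K ζ_k Ψ^k ) A^S c^S + (1/2) δcᵀ ( L T + Σ_{k=0}^K ζ_k Γ^k ) c^{S×2}. (This identity establishes the fourth order coupling condition bᶠᵀ Aᶠˢ Aˢᶠ cᶠ = 1/24 of internal stage predictor-corrector MRI-GARK methods.) -/
open Matrix

/-- Kronecker product of an s×s matrix with a column vector in ℝ^m,
yielding an (sm)×s matrix. -/
def kronMV {s m : ℕ} (M : Matrix (Fin s) (Fin s) ℝ) (v : Fin m → ℝ) :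
    Matrix (Fin s × Fin m) (Fin s) ℝ :=
  Matrix.of fun p j => M p.1 j * v p.2

/-!
Multiplying `M ⊗ v` on the left by `(δ ⊗ b)ᵀ` contracts the fast index and leaves `(bᵀv) δᵀM`.
So `(δ ⊗ b)ᵀ` replaces each column vector in the coupling matrices by its `b`-weighted sum:
`𝟙` becomes `1` and `A c^{×k}` becomes `ζ_k`.
-/

theorem vecMul_kronMV {s m : ℕ} (M : Matrix (Fin s) (Fin s) ℝ) (v b : Fin m → ℝ)
    (δ : Fin s → ℝ) :
    (fun p : Fin s × Fin m => δ p.1 * b p.2) ᵥ* kronMV M v = (b ⬝ᵥ v) • (δ ᵥ* M) := by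
  ext j
  calc ∑ p : Fin s × Fin m, δ p.1 * b p.2 * (M p.1 j * v p.2)
      = ∑ p : Fin s × Fin m, δ p.1 * M p.1 j * (b p.2 * v p.2) :=
        Finset.sum_congr rfl fun _ _ => mul_mul_mul_comm ..
    _ = (∑ i, δ i * M i j) * ∑ a, b a * v a := by
        rw [Fintype.sum_prod_type, Finset.sum_mul_sum]
    _ = (b ⬝ᵥ v) * (δ ᵥ* M) j := mul_comm ..

section Coupling

variable {s m : ℕ} {ι : Type*} [Fintype ι] {b : Fin m → ℝ} {v : ι → Fin m → ℝ} {ζ : ι → ℝ}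

theorem vecMul_sum_kronMV (hv : ∀ k, b ⬝ᵥ v k = ζ k) (Ψ : ι → Matrix (Fin s) (Fin s) ℝ)
    (δ : Fin s → ℝ) :
    (fun p : Fin s × Fin m => δ p.1 * b p.2) ᵥ* ∑ k, kronMV (Ψ k) (v k) =
      δ ᵥ* ∑ k, ζ k • Ψ k := by
  simp only [vecMul_sum, vecMul_kronMV, hv, vecMul_smul]

theorem vecMul_kronMV_one_add_sum (hb : b ⬝ᵥ 1 = 1) (hv : ∀ k, b ⬝ᵥ v k = ζ k)
    (N : Matrix (Fin s) (Fin s) ℝ) (Ψ : ι → Matrix (Fin s) (Fin s) ℝ) (δ : Fin s → ℝ) :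
    (fun p : Fin s × Fin m => δ p.1 * b p.2) ᵥ* (kronMV N 1 + ∑ k, kronMV (Ψ k) (v k)) =
      δ ᵥ* (N + ∑ k, ζ k • Ψ k) := by
  rw [vecMul_add, vecMul_kronMV, hb, one_smul, vecMul_sum_kronMV hv, ← vecMul_add]

theorem stmt_18_general (hb : b ⬝ᵥ 1 = 1) (hv : ∀ k, b ⬝ᵥ v k = ζ k)
    (N P : Matrix (Fin s) (Fin s) ℝ) (Ψ Γ : ι → Matrix (Fin s) (Fin s) ℝ)
    (δ x y : Fin s → ℝ) (θ : ℝ) :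
    (fun p : Fin s × Fin m => δ p.1 * b p.2) ⬝ᵥ
        ((kronMV N 1 + ∑ k, kronMV (Ψ k) (v k)) *ᵥ x +
          θ • (kronMV P 1 + ∑ k, kronMV (Γ k) (v k)) *ᵥ y) =
      δ ⬝ᵥ (N + ∑ k, ζ k • Ψ k) *ᵥ x + θ * (δ ⬝ᵥ (P + ∑ k, ζ k • Γ k) *ᵥ y) := by
  simp only [dotProduct_add, dotProduct_smul, smul_eq_mul, dotProduct_mulVec,
    vecMul_kronMV_one_add_sum hb hv]

end Coupling

/-- Identity establishing the fourth order coupling condition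
bᶠᵀ Aᶠˢ Aˢᶠ cᶠ = 1/24 of internal stage predictor-corrector MRI-GARK methods. -/
theorem stmt_18 (s m K : ℕ) (hs : 1 ≤ s) (hm : 1 ≤ m)
    (AS D T : Matrix (Fin s) (Fin s) ℝ)
    (hD : ∀ i j : Fin s, D i j = if i = j then AS i j else 0)
    (hT : ∀ i j : Fin s, T i j = if j < i then AS i j else 0)
    (cS δc : Fin s → ℝ)
    (Ψ Γ : Fin (K + 1) → Matrix (Fin s) (Fin s) ℝ)
    (L : Matrix (Fin s) (Fin s) ℝ)
    (hL : ∀ i j : Fin s, L i j = if (i : ℕ) = (j : ℕ) + 1 then 1 else 0)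
    (b : Fin m → ℝ) (A : Matrix (Fin m) (Fin m) ℝ) (c : Fin m → ℝ)
    (hb1 : b ⬝ᵥ (fun _ => (1 : ℝ)) = 1)
    (hbA : ∀ k : Fin (K + 1), b ⬝ᵥ A.mulVec (fun i => c i ^ (k : ℕ)) =
      1 / ((((k : ℕ) : ℝ) + 1) * (((k : ℕ) : ℝ) + 2))) :
    (fun p : Fin s × Fin m => δc p.1 * b p.2) ⬝ᵥ
      ((kronMV (L * D) (fun _ => (1 : ℝ)) + ∑ k : Fin (K + 1),
          kronMV (Ψ k) (A.mulVec (fun i => c i ^ (k : ℕ)))).mulVec (AS.mulVec cS)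
        + (1 / 2 : ℝ) •
          (kronMV (L * T) (fun _ => (1 : ℝ)) + ∑ k : Fin (K + 1),
            kronMV (Γ k) (A.mulVec (fun i => c i ^ (k : ℕ)))).mulVec
              (fun i => cS i ^ 2))
    = δc ⬝ᵥ ((L * D + ∑ k : Fin (K + 1),
          (1 / ((((k : ℕ) : ℝ) + 1) * (((k : ℕ) : ℝ) + 2))) • Ψ k).mulVec
            (AS.mulVec cS))
      + (1 / 2 : ℝ) * (δc ⬝ᵥ ((L * T + ∑ k : Fin (K + 1),
          (1 / ((((k : ℕ) : ℝ) + 1) * (((k : ℕ) : ℝ) + 2))) • Γ k).mulVec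
            (fun i => cS i ^ 2))) :=
  stmt_18_general hb1 hbA (L * D) (L * T) Ψ Γ δc (AS *ᵥ cS) (fun i => cS i ^ 2) (1 / 2)
end
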